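/- Let ν = (ν⁰, ν^∞) where ν⁰ is a Borel probability measure on 𝕍 with finite first moment and ν^∞ is a finite positive Borel measure on the unit sphere 𝕊_𝕍, and let z ∈ 𝕍. Then ν ∈ Y(z) if and only if ν̄⁰ + ν̄^∞ = z (where ν̄ denotes the first moment of a measure) and for every 𝒜-quasiconvex integrand f : 𝕍 → ℝ of linear growth the Jensen-type inequality ∫_𝕍 f dν⁰ + ∫_{𝕊_𝕍} f^∞ dν^∞ ≥ f(z) holds, where f^∞ is the upper recession function of f. -/

import Mathlib

open MeasureTheory Filter Topology

noncomputable section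

/-! ## Basic PDE setup -/

abbrev Dom (n : ℕ) := Fin n → ℝ

def unitCube (n : ℕ) : Set (Dom n) := Set.univ.pi fun _ => Set.Ioo (-(1/2) : ℝ) (1/2)

def closedUnitCube (n : ℕ) : Set (Dom n) := Set.univ.pi fun _ => Set.Icc (-(1/2) : ℝ) (1/2)

/-- The finite set of multi-indices of degree `k`. -/
def degSet (n k : ℕ) : Finset (Fin n → ℕ) :=
  (Fintype.piFinset fun _ : Fin n => Finset.range (k+1)).filter fun α => (∑ i, α i) = k

/-- Partial derivative in the `j`-th coordinate direction. -/
def pderivDir {n : ℕ} {V : Type*} [NormedAddCommGroup V] [NormedSpace ℝ V]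
    (j : Fin n) (u : Dom n → V) : Dom n → V :=
  fun x => fderiv ℝ u x (Pi.single j 1)

/-- The multi-index partial derivative `∂^α`. -/
def mderiv {n : ℕ} {V : Type*} [NormedAddCommGroup V] [NormedSpace ℝ V]
    (α : Fin n → ℕ) (u : Dom n → V) : Dom n → V :=
  (List.finRange n).foldr (fun j f => (pderivDir j)^[α j] f) u

/-- The action of a homogeneous `k`-th order constant-coefficient operator with
coefficients `A α` on a function. -/
def opApply {n : ℕ} {V W : Type*} [NormedAddCommGroup V] [NormedSpace ℝ V]
    [NormedAddCommGroup W] [NormedSpace ℝ W]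
    (A : (Fin n → ℕ) → (V →L[ℝ] W)) (k : ℕ) (u : Dom n → V) (x : Dom n) : W :=
  ∑ α ∈ degSet n k, A α (mderiv α u x)

/-- The symbol `𝒜(ξ) = Σ_{|α|=k} ξ^α A_α`. -/
def opSymbol {n : ℕ} {V W : Type*} [NormedAddCommGroup V] [NormedSpace ℝ V]
    [NormedAddCommGroup W] [NormedSpace ℝ W]
    (A : (Fin n → ℕ) → (V →L[ℝ] W)) (k : ℕ) (ξ : Dom n) : V →L[ℝ] W :=
  ∑ α ∈ degSet n k, (∏ i, ξ i ^ α i) • A α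

/-- The wave cone `Λ_𝒜 = ⋃_{ξ ≠ 0} ker 𝒜(ξ)`. -/
def waveCone {n : ℕ} {V W : Type*} [NormedAddCommGroup V] [NormedSpace ℝ V]
    [NormedAddCommGroup W] [NormedSpace ℝ W]
    (A : (Fin n → ℕ) → (V →L[ℝ] W)) (k : ℕ) : Set V :=
  {v | ∃ ξ : Dom n, ξ ≠ 0 ∧ opSymbol A k ξ v = 0}

/-- The wave cone is spanning. -/
def SpanningCone {n : ℕ} {V W : Type*} [NormedAddCommGroup V] [NormedSpace ℝ V]
    [NormedAddCommGroup W] [NormedSpace ℝ W]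
    (A : (Fin n → ℕ) → (V →L[ℝ] W)) (k : ℕ) : Prop :=
  Submodule.span ℝ (waveCone A k) = ⊤

/-- `ℬ` is an exact potential of `𝒜`:  `ker 𝒜(ξ) = im ℬ(ξ)` for all `ξ ≠ 0`. -/
def ExactPotential {n : ℕ} {U V W : Type*} [NormedAddCommGroup V] [NormedSpace ℝ V]
    [NormedAddCommGroup W] [NormedSpace ℝ W] [NormedAddCommGroup U] [NormedSpace ℝ U]
    (A : (Fin n → ℕ) → (V →L[ℝ] W)) (k : ℕ)
    (B : (Fin n → ℕ) → (U →L[ℝ] V)) (l : ℕ) : Prop :=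
  ∀ ξ : Dom n, ξ ≠ 0 → LinearMap.ker (opSymbol A k ξ : V →ₗ[ℝ] W) = LinearMap.range (opSymbol B l ξ : U →ₗ[ℝ] V)

/-- `ℤⁿ`-periodicity. -/
def ZPeriodic {n : ℕ} {V : Type*} (v : Dom n → V) : Prop :=
  ∀ (x : Dom n) (m : Fin n → ℤ), v (x + fun i => (m i : ℝ)) = v x

/-- `𝒜`-quasiconvexity of a continuous integrand. -/
def AQuasiconvex {n : ℕ} {V W : Type*} [NormedAddCommGroup V] [NormedSpace ℝ V]
    [NormedAddCommGroup W] [NormedSpace ℝ W]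
    (A : (Fin n → ℕ) → (V →L[ℝ] W)) (k : ℕ) (f : V → ℝ) : Prop :=
  Continuous f ∧ ∀ (z : V) (v : Dom n → V), ContDiff ℝ (⊤ : ℕ∞) v → ZPeriodic v →
    (∫ x in unitCube n, v x) = 0 → (∀ x, opApply A k v x = 0) →
    f z ≤ ∫ x in unitCube n, f (z + v x)

def LinearGrowth {V : Type*} [NormedAddCommGroup V] (f : V → ℝ) : Prop :=
  ∃ c : ℝ, ∀ z, |f z| ≤ c * (1 + ‖z‖)

/-- Upper recession function `f^∞(z) = limsup_{t→∞, z'→z} f(tz')/t`. -/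
def urec {V : Type*} [NormedAddCommGroup V] [NormedSpace ℝ V] (f : V → ℝ) (z : V) : ℝ :=
  limsup (fun p : ℝ × V => f (p.1 • p.2) / p.1) (atTop ×ˢ 𝓝 z)

/-- The radial recession function `z ↦ limsup_{t→∞} f(tz)/t`. -/
def rrec {V : Type*} [NormedAddCommGroup V] [NormedSpace ℝ V] (f : V → ℝ) (z : V) : ℝ :=
  limsup (fun t : ℝ => f (t • z) / t) atTop

/-- `g` is the recession function of `Φ`, the limit being locally uniform. -/
def HasRec {V : Type*} [NormedAddCommGroup V] [NormedSpace ℝ V] (Φ g : V → ℝ) : Prop :=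
  TendstoLocallyUniformly (fun (t : ℝ) (z : V) => Φ (t • z) / t) g atTop

/-- Membership in the class `ℍ`. -/
def MemH {V : Type*} [NormedAddCommGroup V] [NormedSpace ℝ V] (Φ : V → ℝ) : Prop :=
  Continuous Φ ∧ LinearGrowth Φ ∧ ∃ g : V → ℝ, HasRec Φ g

/-- `C_c^∞` functions with support in `Ω`. -/
def CcSmooth {n : ℕ} {U : Type*} [NormedAddCommGroup U] [NormedSpace ℝ U]
    (Ω : Set (Dom n)) (u : Dom n → U) : Prop :=
  ContDiff ℝ (⊤ : ℕ∞) u ∧ HasCompactSupport u ∧ tsupport u ⊆ Ω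

/-- The `W^{l-1,1}` norm : sum of the `L¹` norms of derivatives of order `< l`. -/
def sobNorm {n : ℕ} {U : Type*} [NormedAddCommGroup U] [NormedSpace ℝ U]
    (l : ℕ) (u : Dom n → U) : ℝ :=
  ∑ j ∈ Finset.range l, ∫ x : Dom n, ‖iteratedFDeriv ℝ j u x‖

/-- Membership of a pair `(ν⁰, ν^∞)` in the set `Y(z)` of Young measures generated by
sequences `z + ℬ u_j` with `u_j ∈ C_c^∞(𝕏, 𝕌)` and `‖u_j‖_{W^{l-1,1}} → 0`. -/
def memY {n : ℕ} {U V : Type*} [NormedAddCommGroup V] [InnerProductSpace ℝ V]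
    [FiniteDimensional ℝ V] [MeasurableSpace V] [BorelSpace V]
    [NormedAddCommGroup U] [NormedSpace ℝ U]
    (B : (Fin n → ℕ) → (U →L[ℝ] V)) (l : ℕ) (z : V)
    (nu0 : Measure V) (nuInf : Measure (Metric.sphere (0:V) 1)) : Prop :=
  ∃ u : ℕ → Dom n → U,
    (∀ j, CcSmooth (unitCube n) (u j)) ∧
    Tendsto (fun j => sobNorm l (u j)) atTop (𝓝 0) ∧
    ∀ Φ : V → ℝ, MemH Φ →
      Tendsto (fun j => ∫ x in unitCube n, Φ (z + opApply B l (u j) x)) atTop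
        (𝓝 ((∫ v, Φ v ∂nu0) + ∫ w, rrec Φ (w : V) ∂nuInf))

/-! ## Statement 1: Hahn–Banach characterization of homogeneous Young measures -/

/-! ## Operator calculus -/

section OpCalc

variable {n : ℕ} {V V' W U : Type*} [NormedAddCommGroup V] [NormedSpace ℝ V]
  [NormedAddCommGroup V'] [NormedSpace ℝ V']
  [NormedAddCommGroup W] [NormedSpace ℝ W] [NormedAddCommGroup U] [NormedSpace ℝ U]

abbrev Sm (u : Dom n → V) : Prop := ContDiff ℝ ((⊤ : ℕ∞) : WithTop ℕ∞) u

theorem Sm.differentiable {u : Dom n → V} (h : Sm u) : Differentiable ℝ u :=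
  ContDiff.differentiable h (by simp)

theorem Sm.pderivDir {u : Dom n → V} (h : Sm u) (j : Fin n) : Sm (pderivDir j u) := by
  unfold _root_.pderivDir
  have : Sm (fun x => fderiv ℝ u x) := by
    have := h.fderiv_right (m := ((⊤ : ℕ∞) : WithTop ℕ∞)) (by simp)
    exact this
  exact this.clm_apply contDiff_const

/-- Induction principle for multi-index derivatives. -/
theorem mderiv_ind {M : Type*} [CommMonoid M] (p : Fin n → M)
    (R : M → (Dom n → V) → (Dom n → V') → Prop)
    (h : ∀ c u v j, R c u v → R (c * p j) (pderivDir j u) (pderivDir j v))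
    {c : M} {u : Dom n → V} {v : Dom n → V'} (h0 : R c u v) (α : Fin n → ℕ) :
    R (c * ∏ j, p j ^ α j) (mderiv α u) (mderiv α v) := by
  have key : ∀ L : List (Fin n), R (c * (L.map fun j => p j ^ α j).prod)
      (L.foldr (fun j f => (pderivDir j)^[α j] f) u)
      (L.foldr (fun j f => (pderivDir j)^[α j] f) v) := by
    intro L
    induction L with
    | nil => simpa using h0
    | cons j L ih =>
      have it : ∀ (m : ℕ) c u v, R c u v →
          R (c * p j ^ m) ((pderivDir j)^[m] u) ((pderivDir j)^[m] v) := by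
        intro m
        induction m with
        | zero => intro c u v h; simpa using h
        | succ m ihm =>
          intro c u v hh
          have := h _ _ _ j (ihm c u v hh)
          rw [Function.iterate_succ_apply', Function.iterate_succ_apply', pow_succ, ← mul_assoc]
          exact this
      have := it (α j) _ _ _ ih
      simp only [List.map_cons, List.prod_cons, List.foldr_cons]
      rw [mul_comm (p j ^ α j), ← mul_assoc]
      exact this
  have := key (List.finRange n)
  rw [← List.ofFn_eq_map, List.prod_ofFn] at this
  exact this

theorem Sm.mderiv {u : Dom n → V} (h : Sm u) (α : Fin n → ℕ) : Sm (mderiv α u) :=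
  mderiv_ind (M := ℕ) (V' := V) (fun _ => 1) (fun _ f _ => Sm f)
    (fun _ _ _ j hf => hf.pderivDir j) (c := 1) (v := u) h α

theorem mderiv_clm (L : V →L[ℝ] V') {u : Dom n → V} (h : Sm u) (α : Fin n → ℕ) :
    mderiv α (fun x => L (u x)) = fun x => L (mderiv α u x) := by
  have := mderiv_ind (M := ℕ) (fun _ => 1)
    (fun _ (f : Dom n → V') (g : Dom n → V) => Sm g ∧ f = fun x => L (g x))
    (fun _ f g j hf => ⟨hf.1.pderivDir j, by
      rw [hf.2]
      funext x
      have h1 : HasFDerivAt (fun x => L (g x)) (L.comp (fderiv ℝ g x)) x :=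
        L.hasFDerivAt.comp x (hf.1.differentiable x).hasFDerivAt
      simp only [pderivDir, h1.fderiv, ContinuousLinearMap.comp_apply]⟩)
    (c := 1) (u := fun x => L (u x)) (v := u) ⟨h, rfl⟩ α
  exact this.2

theorem mderiv_sum {ι : Type*} [Fintype ι] {u : ι → Dom n → V} (h : ∀ i, Sm (u i))
    (α : Fin n → ℕ) : mderiv α (fun x => ∑ i, u i x) = fun x => ∑ i, mderiv α (u i) x := by
  have hp : Sm (fun x => fun i => u i x) := contDiff_pi.2 h
  have h1 := mderiv_clm (∑ i, ContinuousLinearMap.proj (R := ℝ) (φ := fun _ : ι => V) i) hp α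
  have h2 := fun i => mderiv_clm (ContinuousLinearMap.proj (R := ℝ) (φ := fun _ : ι => V) i) hp α
  simp only [_root_.sum_apply, ContinuousLinearMap.proj_apply] at h1 h2
  rw [h1]
  funext x
  refine Finset.sum_congr rfl fun i _ => ?_
  rw [h2 i]

theorem mderiv_add {u v : Dom n → V} (hu : Sm u) (hv : Sm v) (α : Fin n → ℕ) :
    mderiv α (fun x => u x + v x) = fun x => mderiv α u x + mderiv α v x := by
  have := mderiv_sum (u := ![u, v]) (by intro i; fin_cases i <;> simpa) α
  simpa [Fin.sum_univ_two] using this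

theorem mderiv_scale {u : Dom n → V} (h : Sm u) (c : ℝ) (b : Dom n) (α : Fin n → ℕ) :
    mderiv α (fun x => u (c • x + b)) = fun x => c ^ (∑ i, α i) • mderiv α u (c • x + b) := by
  have := mderiv_ind (M := ℝ) (fun _ => c)
    (fun a (f : Dom n → V) (g : Dom n → V) => Sm g ∧ f = fun x => a • g (c • x + b))
    (fun a f g j hf => ⟨hf.1.pderivDir j, by
      rw [hf.2]
      funext x
      have h0 : HasFDerivAt (fun x : Dom n => c • x + b)
          (c • ContinuousLinearMap.id ℝ (Dom n)) x :=
        ((hasFDerivAt_id x).const_smul c).add_const b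
      have h1 : HasFDerivAt (fun x => a • g (c • x + b))
          (a • (fderiv ℝ g (c • x + b)).comp (c • ContinuousLinearMap.id ℝ (Dom n))) x :=
        ((hf.1.differentiable (c • x + b)).hasFDerivAt.comp x h0).const_smul a
      simp only [pderivDir, h1.fderiv]
      simp [mul_smul]⟩)
    (c := 1) (u := fun x => u (c • x + b)) (v := u) ⟨h, by simp⟩ α
  rw [this.2, Finset.prod_pow_eq_pow_sum]
  simp

theorem mderiv_congr {u v : Dom n → V} {x : Dom n} (h : u =ᶠ[𝓝 x] v) (α : Fin n → ℕ) :
    mderiv α u =ᶠ[𝓝 x] mderiv α v :=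
  mderiv_ind (M := ℕ) (fun _ => 1)
    (fun _ (f : Dom n → V) (g : Dom n → V) => f =ᶠ[𝓝 x] g)
    (fun _ f g j hf => by
      filter_upwards [hf.fderiv (𝕜 := ℝ)] with y hy
      simp [pderivDir, hy]) (c := 1) h α

theorem mderiv_zero (α : Fin n → ℕ) : mderiv α (fun _ : Dom n => (0 : V)) = fun _ => 0 := by
  have := mderiv_clm (n := n) (0 : V →L[ℝ] V) (u := fun _ => 0) contDiff_const α
  simpa using this

theorem Sm.opApply {B : (Fin n → ℕ) → (U →L[ℝ] V)} {l : ℕ} {u : Dom n → U} (h : Sm u) :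
    Sm (opApply B l u) := by
  unfold _root_.opApply
  exact ContDiff.sum fun α _ => (B α).contDiff.comp (h.mderiv α)

theorem opApply_congr {B : (Fin n → ℕ) → (U →L[ℝ] V)} {l : ℕ} {u v : Dom n → U} {x : Dom n}
    (h : u =ᶠ[𝓝 x] v) : opApply B l u =ᶠ[𝓝 x] opApply B l v := by
  have : ∀ᶠ y in 𝓝 x, ∀ α ∈ degSet n l, mderiv α u y = mderiv α v y :=
    (Filter.eventually_all_finset _).2 fun α _ => mderiv_congr h α
  filter_upwards [this] with y hy
  exact Finset.sum_congr rfl fun α hα => by rw [hy α hα]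

theorem opApply_zero {B : (Fin n → ℕ) → (U →L[ℝ] V)} {l : ℕ} :
    opApply B l (fun _ => (0 : U)) = fun _ => 0 := by
  funext x; simp [opApply, mderiv_zero]

theorem opApply_eq_zero {B : (Fin n → ℕ) → (U →L[ℝ] V)} {l : ℕ} {u : Dom n → U} {x : Dom n}
    (h : x ∉ tsupport u) : opApply B l u x = 0 := by
  have h1 : u =ᶠ[𝓝 x] fun _ => 0 := notMem_tsupport_iff_eventuallyEq.1 h
  have := (opApply_congr (B := B) (l := l) h1).self_of_nhds
  rw [this, opApply_zero]

theorem tsupport_opApply {B : (Fin n → ℕ) → (U →L[ℝ] V)} {l : ℕ} {u : Dom n → U} :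
    tsupport (opApply B l u) ⊆ tsupport u := by
  refine closure_minimal ?_ (isClosed_tsupport u)
  intro x hx
  by_contra h
  exact hx (opApply_eq_zero h)

theorem opApply_sum {B : (Fin n → ℕ) → (U →L[ℝ] V)} {l : ℕ} {ι : Type*} [Fintype ι]
    {u : ι → Dom n → U} (h : ∀ i, Sm (u i)) (x : Dom n) :
    opApply B l (fun x => ∑ i, u i x) x = ∑ i, opApply B l (u i) x := by
  unfold opApply
  rw [Finset.sum_comm]
  refine Finset.sum_congr rfl fun α _ => ?_
  rw [mderiv_sum h, map_sum]

theorem opApply_add {B : (Fin n → ℕ) → (U →L[ℝ] V)} {l : ℕ}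
    {u v : Dom n → U} (hu : Sm u) (hv : Sm v) (x : Dom n) :
    opApply B l (fun x => u x + v x) x = opApply B l u x + opApply B l v x := by
  unfold opApply
  rw [← Finset.sum_add_distrib]
  refine Finset.sum_congr rfl fun α _ => ?_
  rw [mderiv_add hu hv, map_add]

theorem mem_degSet {k : ℕ} {α : Fin n → ℕ} (h : α ∈ degSet n k) : ∑ i, α i = k := by
  unfold degSet at h
  exact (Finset.mem_filter.1 h).2

theorem opApply_scale {B : (Fin n → ℕ) → (U →L[ℝ] V)} {l : ℕ} {u : Dom n → U} (h : Sm u)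
    {c : ℝ} (hc : c ≠ 0) (b : Dom n) (x : Dom n) :
    opApply B l (fun x => (c ^ l)⁻¹ • u (c • x + b)) x = opApply B l u (c • x + b) := by
  unfold opApply
  refine Finset.sum_congr rfl fun α hα => ?_
  have hs : Sm (fun x => u (c • x + b)) :=
    ContDiff.comp h ((contDiff_const_smul c).add contDiff_const)
  have := mderiv_clm ((c ^ l)⁻¹ • ContinuousLinearMap.id ℝ U) hs α
  simp only [_root_.smul_apply, ContinuousLinearMap.id_apply] at this
  rw [this, mderiv_scale h, mem_degSet hα]
  simp only []
  rw [smul_smul, inv_mul_cancel₀ (pow_ne_zero _ hc), one_smul]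

theorem opApply_translate {B : (Fin n → ℕ) → (U →L[ℝ] V)} {l : ℕ} {u : Dom n → U} (h : Sm u)
    (b : Dom n) (x : Dom n) :
    opApply B l (fun x => u (x + b)) x = opApply B l u (x + b) := by
  have := opApply_scale (B := B) (l := l) h one_ne_zero b x
  simpa using this

/-! ### Commutation -/

theorem pderivDir_comm {u : Dom n → V} (h : Sm u) (i j : Fin n) :
    pderivDir i (pderivDir j u) = pderivDir j (pderivDir i u) := by
  funext x
  have hs : IsSymmSndFDerivAt ℝ u x :=
    ContDiffAt.isSymmSndFDerivAt h.contDiffAt (n := ((⊤ : ℕ∞) : WithTop ℕ∞)) (by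
      simp only [minSmoothness_of_isRCLikeNormedField]
      exact WithTop.coe_le_coe.2 (le_top : (2 : ℕ∞) ≤ ⊤))
  have hd : DifferentiableAt ℝ (fderiv ℝ u) x := by
    have := h.fderiv_right (m := ((⊤ : ℕ∞) : WithTop ℕ∞)) (by simp)
    exact (ContDiff.differentiable this (by simp)) x
  have key : ∀ i j : Fin n, pderivDir i (pderivDir j u) x =
      fderiv ℝ (fderiv ℝ u) x (Pi.single i 1) (Pi.single j 1) := by
    intro i j
    unfold pderivDir
    rw [fderiv_clm_apply hd (differentiableAt_const _)]
    simp
  rw [key, key]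
  exact hs.eq _ _

def mdL (L : List (Fin n)) (α : Fin n → ℕ) (u : Dom n → V) : Dom n → V :=
  L.foldr (fun j f => (pderivDir j)^[α j] f) u

theorem Sm.iter {u : Dom n → V} (h : Sm u) (j : Fin n) (m : ℕ) : Sm ((_root_.pderivDir j)^[m] u) := by
  induction m with
  | zero => exact h
  | succ m ih => rw [Function.iterate_succ_apply']; exact ih.pderivDir j

theorem Sm.mdL {u : Dom n → V} (h : Sm u) (L : List (Fin n)) (α : Fin n → ℕ) :
    Sm (mdL L α u) := by
  induction L with
  | nil => exact h
  | cons j L ih => exact ih.iter j _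

theorem iter_comm1 {u : Dom n → V} (h : Sm u) (i j : Fin n) (m : ℕ) :
    pderivDir i ((pderivDir j)^[m] u) = (pderivDir j)^[m] (pderivDir i u) := by
  induction m with
  | zero => rfl
  | succ m ih =>
    rw [Function.iterate_succ_apply', Function.iterate_succ_apply',
      pderivDir_comm (h.iter j m), ih]

theorem iter_mdL {u : Dom n → V} (h : Sm u) (i : Fin n) (m : ℕ) (L : List (Fin n))
    (α : Fin n → ℕ) :
    (pderivDir i)^[m] (mdL L α u) = mdL L α ((pderivDir i)^[m] u) := by
  induction m generalizing u with
  | zero => rfl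
  | succ m ih =>
    rw [Function.iterate_succ_apply, Function.iterate_succ_apply, ← ih (h.pderivDir i)]
    congr 1
    clear ih
    induction L with
    | nil => rfl
    | cons j L ih =>
      change pderivDir i ((pderivDir j)^[α j] (mdL L α u)) =
        (pderivDir j)^[α j] (mdL L α (pderivDir i u))
      rw [iter_comm1 (h.mdL L α), ih]

theorem mderiv_mderiv {u : Dom n → V} (h : Sm u) (α β : Fin n → ℕ) :
    mderiv α (mderiv β u) = mderiv (α + β) u := by
  change mdL _ α (mdL _ β u) = mdL _ (α + β) u
  induction (List.finRange n) with
  | nil => rfl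
  | cons j L ih =>
    change (pderivDir j)^[α j] (mdL L α ((pderivDir j)^[β j] (mdL L β u))) =
      (pderivDir j)^[α j + β j] (mdL L (α + β) u)
    rw [← iter_mdL (h.mdL L β), ih, Function.iterate_add_apply]

/-- The composition of `A` and `B` vanishes. -/
theorem opApply_opApply {W : Type*} [NormedAddCommGroup W] [InnerProductSpace ℝ W]
    {A : (Fin n → ℕ) → (V →L[ℝ] W)} {k : ℕ} (hk : 0 < k)
    {B : (Fin n → ℕ) → (U →L[ℝ] V)} {l : ℕ} (hAB : ExactPotential A k B l)
    {u : Dom n → U} (h : Sm u) (x : Dom n) :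
    opApply A k (opApply B l u) x = 0 := by
  have h1 : opApply A k (opApply B l u) x =
      ∑ α ∈ degSet n k, ∑ β ∈ degSet n l, A α (B β (mderiv (α + β) u x)) := by
    unfold opApply
    refine Finset.sum_congr rfl fun α _ => ?_
    have : (fun x => ∑ β ∈ degSet n l, B β (mderiv β u x)) =
        fun x => ∑ β : ↥(degSet n l), B β (mderiv β u x) := by
      funext y
      rw [Finset.sum_coe_sort (degSet n l) (fun β => B β (mderiv β u y))]
    rw [this, mderiv_sum (ι := ↥(degSet n l)) (u := fun β x => B β (mderiv β u x)) (fun β => (B β).contDiff.comp (h.mderiv β)), map_sum,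
      Finset.sum_coe_sort (degSet n l)
        (fun β => A α (mderiv α (fun x => B β (mderiv β u x)) x))]
    refine Finset.sum_congr rfl fun β _ => ?_
    rw [mderiv_clm _ (h.mderiv β), mderiv_mderiv h]
  have hsym : ∀ (ξ : Dom n) (y : U), opSymbol A k ξ (opSymbol B l ξ y) = 0 := by
    intro ξ y
    by_cases hξ : ξ = 0
    · have : opSymbol A k ξ = 0 := by
        unfold opSymbol
        refine Finset.sum_eq_zero fun α hα => ?_
        have h2 := mem_degSet hα
        obtain ⟨i, hi⟩ : ∃ i, α i ≠ 0 := by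
          by_contra hcon
          push Not at hcon
          simp [hcon] at h2
          omega
        rw [Finset.prod_eq_zero (Finset.mem_univ i) (by simp [hξ, hi]), zero_smul]
      simp [this]
    · have : opSymbol B l ξ y ∈ LinearMap.range (opSymbol B l ξ : U →ₗ[ℝ] V) := ⟨y, rfl⟩
      rw [← hAB ξ hξ] at this
      exact this
  have hco : ∀ (γ : Fin n → ℕ) (y : U), ∑ α ∈ degSet n k, ∑ β ∈ degSet n l,
      (if α + β = γ then A α (B β y) else 0) = 0 := by
    intro γ y
    refine ext_inner_left ℝ fun w => ?_
    rw [inner_zero_right]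
    let P : MvPolynomial (Fin n) ℝ := ∑ α ∈ degSet n k, ∑ β ∈ degSet n l,
      MvPolynomial.monomial (Finsupp.equivFunOnFinite.symm (α + β)) (inner ℝ w (A α (B β y)))
    have hP : P = 0 := by
      apply MvPolynomial.funext
      intro ξ
      have e : opSymbol A k ξ (opSymbol B l ξ y) = ∑ α ∈ degSet n k, ∑ β ∈ degSet n l,
          (∏ i, ξ i ^ (α i + β i)) • A α (B β y) := by
        simp only [opSymbol, _root_.sum_apply, _root_.smul_apply,
          map_sum, map_smul, Finset.smul_sum, smul_smul, pow_add, Finset.prod_mul_distrib]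
        rw [Finset.sum_comm]
        simp only [mul_comm]
      have := hsym ξ y
      rw [e] at this
      have h3 := congrArg (fun t => inner ℝ w t) this
      simp only [inner_sum, inner_smul_right, inner_zero_right] at h3
      simp only [P, map_sum, MvPolynomial.eval_monomial, map_zero]
      rw [← h3]
      refine Finset.sum_congr rfl fun α _ => Finset.sum_congr rfl fun β _ => ?_
      rw [mul_comm]
      congr 1
      rw [Finsupp.prod_fintype _ _ (by simp)]
      simp
    have := congrArg (MvPolynomial.coeff (Finsupp.equivFunOnFinite.symm γ)) hP
    simp only [P, MvPolynomial.coeff_sum, MvPolynomial.coeff_monomial, MvPolynomial.coeff_zero,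
      EmbeddingLike.apply_eq_iff_eq] at this
    rw [← this]
    simp only [inner_sum]
    refine Finset.sum_congr rfl fun α _ => Finset.sum_congr rfl fun β _ => ?_
    split_ifs <;> simp
  rw [h1]
  let T : Finset (Fin n → ℕ) := (degSet n k ×ˢ degSet n l).image fun p => p.1 + p.2
  have h4 : ∀ α ∈ degSet n k, ∀ β ∈ degSet n l, A α (B β (mderiv (α + β) u x)) =
      ∑ γ ∈ T, (if α + β = γ then A α (B β (mderiv γ u x)) else 0) := by
    intro α hα β hβ
    rw [Finset.sum_ite_eq, if_pos]
    exact Finset.mem_image.2 ⟨(α, β), Finset.mem_product.2 ⟨hα, hβ⟩, rfl⟩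
  rw [Finset.sum_congr rfl fun α hα => Finset.sum_congr rfl fun β hβ => h4 α hα β hβ]
  rw [Finset.sum_congr rfl fun α hα => Finset.sum_comm, Finset.sum_comm]
  exact Finset.sum_eq_zero fun γ _ => hco γ _

end OpCalc

/-! ## Integrals over cubes -/

section Cubes

variable {n : ℕ} {E : Type*} [NormedAddCommGroup E] [NormedSpace ℝ E]

def hcube (a : Dom n) : Set (Dom n) := Set.univ.pi fun i => Set.Ico (a i) (a i + 1)

def ctr (n : ℕ) : Dom n := fun _ => -(1/2)

theorem unitCube_ae_eq : (unitCube n : Set (Dom n)) =ᵐ[volume] hcube (ctr n) := by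
  have h1 := Measure.univ_pi_Ioo_ae_eq_Icc (μ := fun _ : Fin n => (volume : Measure ℝ))
    (f := ctr n) (g := fun i => ctr n i + 1)
  have h2 := Measure.univ_pi_Ico_ae_eq_Icc (μ := fun _ : Fin n => (volume : Measure ℝ))
    (f := ctr n) (g := fun i => ctr n i + 1)
  have h3 : unitCube n = Set.univ.pi fun i => Set.Ioo (ctr n i) (ctr n i + 1) := by
    unfold unitCube ctr
    congr 1
    funext i
    norm_num
  rw [h3]
  exact h1.trans h2.symm

theorem measurableSet_unitCube : MeasurableSet (unitCube n) :=
  MeasurableSet.univ_pi fun _ => measurableSet_Ioo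

theorem measurableSet_hcube (a : Dom n) : MeasurableSet (hcube a) :=
  MeasurableSet.univ_pi fun _ => measurableSet_Ico

theorem isOpen_unitCube : IsOpen (unitCube n) :=
  isOpen_set_pi Set.finite_univ fun _ _ => isOpen_Ioo

theorem unitCube_subset : unitCube n ⊆ closedUnitCube n :=
  Set.pi_mono fun _ _ => Set.Ioo_subset_Icc_self

theorem isCompact_closedUnitCube : IsCompact (closedUnitCube n) :=
  isCompact_univ_pi fun _ => isCompact_Icc

theorem volume_unitCube : volume (unitCube n) = 1 := by
  unfold unitCube
  rw [volume_pi_pi]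
  norm_num

instance isProb_cube : IsProbabilityMeasure (volume.restrict (unitCube n)) :=
  ⟨by rw [Measure.restrict_apply_univ, volume_unitCube]⟩

theorem cube_integrable {F : Dom n → E} (h : Continuous F) : IntegrableOn F (unitCube n) :=
  (h.continuousOn.integrableOn_compact isCompact_closedUnitCube).mono_set unitCube_subset

def gridc {N : ℕ} (i : Fin n → Fin N) : Dom n := fun j => ((i j : ℝ) + 1/2) / N - 1/2

theorem setIntegral_scaled {F : Dom n → E} {N : ℕ} (hN : 0 < N) (s : Set (Dom n))
    (hs : MeasurableSet s) (c : Dom n) :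
    ∫ x in {x | (N : ℝ) • (x - c) ∈ s}, F x =
      ((N : ℝ) ^ n)⁻¹ • ∫ y in s, F (c + (N : ℝ)⁻¹ • y) := by
  have hN' : (N : ℝ) ≠ 0 := by positivity
  have hm : MeasurableSet {x : Dom n | (N : ℝ) • (x - c) ∈ s} := by
    have : Measurable fun x : Dom n => (N : ℝ) • (x - c) := by fun_prop
    exact this hs
  rw [← integral_indicator hm, ← integral_indicator hs]
  have h1 : Set.indicator {x | (N : ℝ) • (x - c) ∈ s} F =
      fun x => (fun w => (s.indicator fun y => F (c + (N : ℝ)⁻¹ • y)) ((N : ℝ) • w)) (x - c) := by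
    funext x
    by_cases hx : (N : ℝ) • (x - c) ∈ s
    · rw [Set.indicator_of_mem (Set.mem_ofPred_eq ▸ hx)]
      simp only []
      rw [Set.indicator_of_mem hx, smul_smul, inv_mul_cancel₀ hN', one_smul, add_sub_cancel]
    · rw [Set.indicator_of_notMem (Set.mem_ofPred_eq ▸ hx)]
      simp only []
      rw [Set.indicator_of_notMem hx]
  rw [h1, integral_sub_right_eq_self (μ := volume)
    (fun w => (s.indicator fun y => F (c + (N : ℝ)⁻¹ • y)) ((N : ℝ) • w)) c,
    Measure.integral_comp_smul]
  simp

theorem mem_grid_iff {N : ℕ} (hN : 0 < N) (i : Fin n → Fin N) (x : Dom n) :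
    (N : ℝ) • (x - gridc i) ∈ hcube (ctr n) ↔
      ∀ j, (i j : ℝ) ≤ N * (x j + 1/2) ∧ N * (x j + 1/2) < i j + 1 := by
  have hN' : (N : ℝ) ≠ 0 := by positivity
  simp only [hcube, ctr, gridc, Set.mem_univ_pi, Set.mem_Ico, Pi.smul_apply, Pi.sub_apply,
    smul_eq_mul]
  refine forall_congr' fun j => ?_
  have : (N : ℝ) * (x j - (((i j : ℝ) + 1/2) / N - 1/2)) = N * (x j + 1/2) - i j - 1/2 := by
    field_simp
    ring
  rw [this]
  constructor <;> rintro ⟨h1, h2⟩ <;> constructor <;> linarith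

/-- Subdivision of the cube into `N^n` cubes. -/
theorem grid_integral {F : Dom n → E} {N : ℕ} (hN : 0 < N) (hF : IntegrableOn F (unitCube n)) :
    ∫ x in unitCube n, F x =
      ∑ i : Fin n → Fin N, ((N : ℝ) ^ n)⁻¹ • ∫ y in unitCube n, F (gridc i + (N : ℝ)⁻¹ • y) := by
  have hNr : (0 : ℝ) < N := by positivity
  rw [setIntegral_congr_set unitCube_ae_eq]
  rw [IntegrableOn, Measure.restrict_congr_set unitCube_ae_eq] at hF
  have hU : hcube (ctr n) = ⋃ i : Fin n → Fin N, {x | (N : ℝ) • (x - gridc i) ∈ hcube (ctr n)} := by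
    ext x
    simp only [Set.mem_iUnion, Set.mem_ofPred_eq, mem_grid_iff hN]
    simp only [hcube, ctr, Set.mem_univ_pi, Set.mem_Ico]
    constructor
    · intro hx
      have hlt : ∀ j, ⌊(N : ℝ) * (x j + 1/2)⌋₊ < N := by
        intro j
        rw [Nat.floor_lt (mul_nonneg hNr.le (by linarith [(hx j).1]))]
        nlinarith [(hx j).2]
      refine ⟨fun j => ⟨⌊(N : ℝ) * (x j + 1/2)⌋₊, hlt j⟩, fun j => ?_⟩
      exact ⟨Nat.floor_le (mul_nonneg hNr.le (by linarith [(hx j).1])), Nat.lt_floor_add_one _⟩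
    · rintro ⟨i, hi⟩ j
      have h1 : ((i j : ℕ) : ℝ) + 1 ≤ N := by exact_mod_cast (i j).2
      have h0 : (0 : ℝ) ≤ ((i j : ℕ) : ℝ) := by positivity
      obtain ⟨h2, h3⟩ := hi j
      constructor
      · have : 0 ≤ (N : ℝ) * (x j + 1/2) := h0.trans h2
        have := nonneg_of_mul_nonneg_right this hNr
        linarith
      · by_contra hcon
        push Not at hcon
        have : (N : ℝ) * 1 ≤ N * (x j + 1/2) := by
          apply mul_le_mul_of_nonneg_left _ hNr.le
          linarith
        linarith
  have hm : ∀ i : Fin n → Fin N, MeasurableSet {x | (N : ℝ) • (x - gridc i) ∈ hcube (ctr n)} := by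
    intro i
    have : Measurable fun x : Dom n => (N : ℝ) • (x - gridc i) := by fun_prop
    exact this (measurableSet_hcube _)
  have hd : Pairwise (Function.onFun Disjoint
      fun i : Fin n → Fin N => {x | (N : ℝ) • (x - gridc i) ∈ hcube (ctr n)}) := by
    intro i i' hne
    rw [Function.onFun, Set.disjoint_left]
    intro x hx hx'
    rw [Set.mem_ofPred_eq, mem_grid_iff hN] at hx hx'
    apply hne
    funext j
    obtain ⟨h1, h2⟩ := hx j
    obtain ⟨h3, h4⟩ := hx' j
    have h5 : ((i j : ℕ) : ℝ) < (i' j : ℕ) + 1 := by linarith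
    have h6 : ((i' j : ℕ) : ℝ) < (i j : ℕ) + 1 := by linarith
    have h7 : (i j : ℕ) < (i' j : ℕ) + 1 := by exact_mod_cast h5
    have h8 : (i' j : ℕ) < (i j : ℕ) + 1 := by exact_mod_cast h6
    exact Fin.ext (by omega)
  conv_lhs => rw [hU]
  rw [integral_iUnion_fintype hm hd]
  · refine Finset.sum_congr rfl fun i _ => ?_
    rw [setIntegral_scaled hN _ (measurableSet_hcube _), setIntegral_congr_set unitCube_ae_eq]
  · intro i
    refine IntegrableOn.mono_set (t := hcube (ctr n)) hF ?_
    conv_rhs => rw [hU]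
    exact Set.subset_iUnion (fun i : Fin n → Fin N => {x | (N : ℝ) • (x - gridc i) ∈ hcube (ctr n)}) i

theorem card_grid (N : ℕ) : (Fintype.card (Fin n → Fin N) : ℝ) = (N : ℝ) ^ n := by
  simp

/-! ### Periodic functions -/

def latt (n : ℕ) : AddSubgroup (Dom n) :=
  (AddMonoidHom.range (⟨⟨fun m i => (m i : ℝ), by funext i; simp⟩,
    fun a b => by funext i; simp⟩ : (Fin n → ℤ) →+ Dom n))

instance : Countable (latt n) := by
  unfold latt
  exact (Set.countable_range _).to_subtype

theorem fund_hcube (a : Dom n) : IsAddFundamentalDomain (latt n) (hcube a) volume := by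
  refine IsAddFundamentalDomain.mk' (measurableSet_hcube a).nullMeasurableSet fun x => ?_
  have hx : ∀ i, ∃! m : ℤ, x i + m • (1 : ℝ) ∈ Set.Ico (a i) (a i + 1) := fun i =>
    existsUnique_add_zsmul_mem_Ico one_pos (x i) (a i)
  choose m hm hu using hx
  refine ⟨⟨fun i => (m i : ℝ), ⟨m, rfl⟩⟩, ?_, ?_⟩
  · simp only [hcube, Set.mem_univ_pi]
    intro i
    have := hm i
    simp only [zsmul_eq_mul, mul_one] at this
    rw [add_comm (x i)] at this
    exact this
  · rintro ⟨g, ⟨m', rfl⟩⟩ hg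
    simp only [hcube, Set.mem_univ_pi] at hg
    apply Subtype.ext
    funext i
    have := hu i (m' i) (by
      have := hg i
      simp only [zsmul_eq_mul, mul_one]
      rw [add_comm (x i)]
      exact this)
    simp [this]

theorem integral_shift {g : Dom n → E} (hg : ZPeriodic g) (b : Dom n) :
    ∫ x in unitCube n, g (x + b) = ∫ x in unitCube n, g x := by
  rw [setIntegral_congr_set unitCube_ae_eq, setIntegral_congr_set unitCube_ae_eq]
  have h1 : ∫ x in hcube (ctr n), g (x + b) = ∫ x in hcube (ctr n + b), g x := by
    rw [← integral_indicator (measurableSet_hcube _), ← integral_indicator (measurableSet_hcube _),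
      ← integral_add_right_eq_self (μ := volume) ((hcube (ctr n + b)).indicator g) b]
    congr 1
    funext x
    simp only [Set.indicator]
    congr 1
    simp only [hcube, Set.mem_univ_pi, Set.mem_Ico, Pi.add_apply, eq_iff_iff]
    refine forall_congr' fun j => ?_
    constructor <;> rintro ⟨h1, h2⟩ <;> constructor <;> linarith
  rw [h1]
  refine (fund_hcube _).setIntegral_eq (fund_hcube _) ?_
  rintro ⟨_, ⟨m, rfl⟩⟩ x
  have := hg x m
  rw [add_comm] at this
  exact this

theorem periodic_bdd {g : Dom n → E} (hg : ZPeriodic g) (hc : Continuous g) :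
    ∃ C : ℝ, 0 ≤ C ∧ ∀ x, ‖g x‖ ≤ C := by
  obtain ⟨C, hC⟩ := isCompact_closedUnitCube.exists_bound_of_continuousOn hc.continuousOn
    (s := closedUnitCube n)
  refine ⟨max C 0, le_max_right _ _, fun x => ?_⟩
  have h := hg x (fun i => - round (x i))
  rw [← h]
  refine (hC _ ?_).trans (le_max_left _ _)
  simp only [closedUnitCube, Set.mem_univ_pi, Set.mem_Icc, Pi.add_apply]
  intro i
  have := abs_sub_round (x i)
  rw [abs_le] at this
  push_cast
  constructor <;> linarith [this.1, this.2]

theorem ZPeriodic.pderivDir {g : Dom n → E} (hg : ZPeriodic g) (j : Fin n) :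
    ZPeriodic (pderivDir j g) := by
  intro x m
  unfold _root_.pderivDir
  have : (fun y => g (y + fun i => (m i : ℝ))) = g := by funext y; exact hg y m
  rw [← fderiv_comp_add_right, this]

theorem integral_pderiv_periodic [CompleteSpace E] {g : Dom n → E} (hg : ZPeriodic g) (hs : Sm g) (j : Fin n) :
    ∫ x in unitCube n, pderivDir j g x = 0 := by
  obtain ⟨C, hC0, hC⟩ := periodic_bdd (hg.pderivDir j) (hs.pderivDir j).continuous
  have hderiv : ∀ x t, HasDerivAt (fun t : ℝ => g (x + t • Pi.single j 1))
      (pderivDir j g (x + t • Pi.single j 1)) t := by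
    intro x t
    have h1 : HasDerivAt (fun t : ℝ => x + t • (Pi.single j 1 : Dom n)) (Pi.single j 1) t := by
      simpa using ((hasDerivAt_id t).smul_const (Pi.single j 1 : Dom n)).const_add x
    exact (hs.differentiable _).hasFDerivAt.comp_hasDerivAt t h1
  have key := hasDerivAt_integral_of_dominated_loc_of_deriv_le (μ := volume.restrict (unitCube n))
    (F := fun t x => g (x + t • Pi.single j 1)) (x₀ := (0 : ℝ)) (s := Set.univ)
    (F' := fun t x => pderivDir j g (x + t • Pi.single j 1)) (bound := fun _ => C)
    Filter.univ_mem
    (Eventually.of_forall fun t => (hs.continuous.comp (by fun_prop)).aestronglyMeasurable)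
    (cube_integrable (hs.continuous.comp (by fun_prop)))
    ((hs.pderivDir j).continuous.comp (by fun_prop)).aestronglyMeasurable
    (Eventually.of_forall fun x t _ => hC _) (integrable_const C)
    (Eventually.of_forall fun x t _ => hderiv x t)
  have h2 := key.2
  simp only [integral_shift hg, zero_smul, add_zero] at h2
  exact h2.unique (hasDerivAt_const _ _)

/-! ### Compactly supported functions -/

theorem integral_pderiv_cc {u : Dom n → E} (hs : Sm u) (hc : HasCompactSupport u) (j : Fin n) :
    ∫ x, pderivDir j u x = 0 := by
  have h1 : Integrable (fun x => fderiv ℝ u x (Pi.single j 1)) volume :=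
    (hs.pderivDir j).continuous.integrable_of_hasCompactSupport
      (hc.fderiv_apply (𝕜 := ℝ) (Pi.single j 1))
  have := integral_smul_fderiv_eq_neg_fderiv_smul_of_integrable (μ := (volume : Measure (Dom n)))
    (f := fun _ => (1 : ℝ)) (g := u) (v := Pi.single j 1) (by simp) (by simpa using h1)
    (by simpa using hs.continuous.integrable_of_hasCompactSupport hc)
    (fun _ _ => differentiableAt_const _) (fun x _ => hs.differentiable x)
  simpa [pderivDir] using this

theorem integral_mderiv_cc {u : Dom n → E} (hs : Sm u) (hc : HasCompactSupport u)
    (α : Fin n → ℕ) (hα : 0 < ∑ i, α i) : Integrable (mderiv α u) ∧ ∫ x, mderiv α u x = 0 := by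
  have := mderiv_ind (M := Multiplicative ℕ) (V' := E) (fun _ => Multiplicative.ofAdd 1)
    (fun c (f : Dom n → E) _ => Sm f ∧ HasCompactSupport f ∧ (c ≠ 1 → ∫ x, f x = 0))
    (fun c f g j hf => ⟨hf.1.pderivDir j, hf.2.1.fderiv_apply (𝕜 := ℝ) (Pi.single j 1),
      fun _ => integral_pderiv_cc hf.1 hf.2.1 j⟩)
    (c := 1) (v := u) ⟨hs, hc, fun h => absurd rfl h⟩ α
  refine ⟨this.1.continuous.integrable_of_hasCompactSupport this.2.1, this.2.2 ?_⟩
  rw [Finset.prod_pow_eq_pow_sum, one_mul, ← ofAdd_nsmul]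
  intro h
  have : (∑ i, α i) • 1 = 0 := h
  simp only [smul_eq_mul, mul_one] at this
  omega

theorem integral_cube_opApply {U V : Type*} [NormedAddCommGroup U] [NormedSpace ℝ U]
    [NormedAddCommGroup V] [NormedSpace ℝ V] [CompleteSpace U] [CompleteSpace V]
    {B : (Fin n → ℕ) → (U →L[ℝ] V)} {l : ℕ} (hl : 0 < l) {u : Dom n → U}
    (hu : CcSmooth (unitCube n) u) : ∫ x in unitCube n, opApply B l u x = 0 := by
  rw [setIntegral_eq_integral_of_forall_compl_eq_zero]
  · unfold opApply
    rw [integral_finsetSum]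
    · refine Finset.sum_eq_zero fun α hα => ?_
      have := integral_mderiv_cc hu.1 hu.2.1 α (by rw [mem_degSet hα]; exact hl)
      rw [(B α).integral_comp_comm this.1, this.2, map_zero]
    · intro α hα
      have := integral_mderiv_cc hu.1 hu.2.1 α (by rw [mem_degSet hα]; exact hl)
      exact (B α).integrable_comp this.1
  · intro x hx
    exact opApply_eq_zero fun h => hx (hu.2.2 h)

end Cubes

/-! ## Gluing -/

section Glue

variable {n : ℕ} {V U : Type*} [NormedAddCommGroup V] [NormedSpace ℝ V]
  [NormedAddCommGroup U] [NormedSpace ℝ U]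

def piece (N l : ℕ) (c : Dom n) (u : Dom n → U) : Dom n → U :=
  fun x => ((N : ℝ) ^ l)⁻¹ • u ((N : ℝ) • x + -((N : ℝ) • c))

def glue (N l : ℕ) (u : (Fin n → Fin N) → Dom n → U) : Dom n → U :=
  fun x => ∑ i, piece N l (gridc i) (u i) x

theorem piece_sm {N l : ℕ} {c : Dom n} {u : Dom n → U} (h : Sm u) : Sm (piece N l c u) := by
  unfold piece
  exact ContDiff.const_smul _ (ContDiff.comp h ((contDiff_const_smul _).add contDiff_const))

theorem glue_cc {N l : ℕ} (hN : 0 < N) {u : (Fin n → Fin N) → Dom n → U}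
    (h : ∀ i, CcSmooth (unitCube n) (u i)) : CcSmooth (unitCube n) (glue N l u) := by
  have hNr : (0 : ℝ) < N := by positivity
  let K : Set (Dom n) := ⋃ i, (fun y => gridc i + (N : ℝ)⁻¹ • y) '' (tsupport (u i))
  have hK : IsCompact K := isCompact_iUnion fun i =>
    (h i).2.1.isCompact.image (by fun_prop)
  have hsub : Function.support (glue N l u) ⊆ K := by
    intro x hx
    have : ∃ i, piece N l (gridc i) (u i) x ≠ 0 := by
      by_contra hcon
      push Not at hcon
      exact hx (Finset.sum_eq_zero fun i _ => hcon i)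
    obtain ⟨i, hi⟩ := this
    refine Set.mem_iUnion.2 ⟨i, (N : ℝ) • x + -((N : ℝ) • gridc i), subset_tsupport _ ?_, ?_⟩
    · intro h0
      apply hi
      simp [piece, h0]
    · simp only [smul_add, smul_neg, smul_smul, inv_mul_cancel₀ hNr.ne', one_smul]
      abel
  have hKc : K ⊆ unitCube n := by
    refine Set.iUnion_subset fun i => ?_
    rintro _ ⟨y, hy, rfl⟩
    have hy' := (h i).2.2 hy
    simp only [unitCube, Set.mem_univ_pi, Set.mem_Ioo] at hy' ⊢
    intro j
    obtain ⟨h1, h2⟩ := hy' j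
    have h3 : ((i j : ℕ) : ℝ) + 1 ≤ N := by exact_mod_cast (i j).2
    have h0 : (0 : ℝ) ≤ ((i j : ℕ) : ℝ) := by positivity
    have e : (gridc i + (N : ℝ)⁻¹ • y) j = ((i j : ℝ) + 1/2 + y j) / N - 1/2 := by
      simp [gridc]
      field_simp
      ring
    rw [e]
    constructor
    · have : 0 < ((i j : ℝ) + 1/2 + y j) / N := div_pos (by linarith) hNr
      linarith
    · have : ((i j : ℝ) + 1/2 + y j) / N < 1 := by rw [div_lt_one hNr]; linarith
      linarith
  refine ⟨?_, HasCompactSupport.of_support_subset_isCompact hK hsub,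
    (closure_minimal hsub hK.isClosed).trans hKc⟩
  exact ContDiff.sum fun i _ => piece_sm (h i).1

theorem glue_apply {N l : ℕ} (hN : 0 < N) {u : (Fin n → Fin N) → Dom n → U}
    (h : ∀ i, CcSmooth (unitCube n) (u i)) (B : (Fin n → ℕ) → (U →L[ℝ] V))
    (i : Fin n → Fin N) {y : Dom n} (hy : y ∈ unitCube n) :
    opApply B l (glue N l u) (gridc i + (N : ℝ)⁻¹ • y) = opApply B l (u i) y := by
  have hNr : (N : ℝ) ≠ 0 := by positivity
  unfold glue
  rw [opApply_sum fun i => piece_sm (h i).1]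
  have e : ∀ i', opApply B l (piece N l (gridc i') (u i')) (gridc i + (N : ℝ)⁻¹ • y) =
      opApply B l (u i') (fun j => y j + ((i j : ℕ) : ℝ) - (i' j : ℕ)) := by
    intro i'
    unfold piece
    rw [opApply_scale (h i').1 hNr]
    congr 1
    funext j
    simp [gridc]
    field_simp
    ring
  simp only [e]
  rw [Finset.sum_eq_single i]
  · congr 1
    funext j
    ring
  · intro i' _ hne
    apply opApply_eq_zero
    intro hmem
    have hm := (h i').2.2 hmem
    apply hne
    simp only [unitCube, Set.mem_univ_pi, Set.mem_Ioo] at hm hy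
    funext j
    obtain ⟨h1, h2⟩ := hm j
    obtain ⟨h3, h4⟩ := hy j
    have h5 : ((i j : ℕ) : ℝ) < (i' j : ℕ) + 1 := by linarith
    have h6 : ((i' j : ℕ) : ℝ) < (i j : ℕ) + 1 := by linarith
    have h7 : (i j : ℕ) < (i' j : ℕ) + 1 := by exact_mod_cast h5
    have h8 : (i' j : ℕ) < (i j : ℕ) + 1 := by exact_mod_cast h6
    exact Fin.ext (by omega)
  · simp

theorem glue_integral {N l : ℕ} (hN : 0 < N) {u : (Fin n → Fin N) → Dom n → U}
    (h : ∀ i, CcSmooth (unitCube n) (u i)) (B : (Fin n → ℕ) → (U →L[ℝ] V))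
    {H : Dom n → V → ℝ} (hH : Continuous fun p : Dom n × V => H p.1 p.2) :
    ∫ x in unitCube n, H x (opApply B l (glue N l u) x) =
      ∑ i, ((N : ℝ) ^ n)⁻¹ *
        ∫ y in unitCube n, H (gridc i + (N : ℝ)⁻¹ • y) (opApply B l (u i) y) := by
  have hs : Sm (glue N l u) := (glue_cc hN h).1
  have hc : Continuous fun x => H x (opApply B l (glue N l u) x) :=
    hH.comp (continuous_id.prodMk (hs.opApply (B := B)).continuous)
  rw [grid_integral hN (cube_integrable hc)]
  refine Finset.sum_congr rfl fun i _ => ?_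
  rw [smul_eq_mul]
  congr 1
  refine setIntegral_congr_fun measurableSet_unitCube fun y hy => ?_
  rw [glue_apply hN h B i hy]

theorem sob_nonneg (l : ℕ) (u : Dom n → U) : 0 ≤ sobNorm l u :=
  Finset.sum_nonneg fun _ _ => integral_nonneg fun _ => norm_nonneg _

theorem glue_sob {N l : ℕ} (hN : 0 < N) {u : Dom n → U} (h : CcSmooth (unitCube n) u) :
    sobNorm l (glue N l fun _ : Fin n → Fin N => u) ≤ (N : ℝ)⁻¹ * sobNorm l u := by
  have hNr : (0 : ℝ) < N := by positivity
  have hN1 : (1 : ℝ) ≤ N := by exact_mod_cast hN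
  unfold sobNorm
  rw [Finset.mul_sum]
  refine Finset.sum_le_sum fun j hj => ?_
  have hjl : j < l := Finset.mem_range.1 hj
  have hint : Integrable (fun x => ‖iteratedFDeriv ℝ j u x‖) :=
    ((h.1.continuous_iteratedFDeriv (m := j)
      (by exact WithTop.coe_le_coe.2 le_top)).integrable_of_hasCompactSupport
      (h.2.1.iteratedFDeriv j)).norm
  have hp : ∀ (c x : Dom n), ‖iteratedFDeriv ℝ j (piece N l c u) x‖ =
      ((N : ℝ) ^ l)⁻¹ * (N : ℝ) ^ j *
        (fun y => (fun w => ‖iteratedFDeriv ℝ j u w‖) ((N : ℝ) • y)) (x + -c) := by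
    intro c x
    have e : piece N l c u = fun x => ((N : ℝ) ^ l)⁻¹ •
        (fun y => (fun w => u ((N : ℝ) • w)) (y + -c)) x := by
      funext x; simp [piece]
    have hsu : ContDiff ℝ j u := h.1.of_le (WithTop.coe_le_coe.2 le_top)
    have hs1 : ContDiff ℝ j (fun w => u ((N : ℝ) • w)) := hsu.comp (contDiff_const_smul _)
    have hs2 : ContDiff ℝ j (fun y => (fun w => u ((N : ℝ) • w)) (y + -c)) :=
      hs1.comp (contDiff_id.add contDiff_const)
    rw [e, iteratedFDeriv_const_smul_apply' hs2.contDiffAt,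
      iteratedFDeriv_comp_add_right (f := fun w => u ((N : ℝ) • w)), iteratedFDeriv_comp_const_smul _ hsu, norm_smul, norm_smul]
    rw [norm_inv, norm_pow, norm_pow, Real.norm_of_nonneg hNr.le, mul_assoc]
  have hpi : ∀ c : Dom n, Integrable (fun x => ‖iteratedFDeriv ℝ j (piece N l c u) x‖) ∧
      ∫ x, ‖iteratedFDeriv ℝ j (piece N l c u) x‖ =
      ((N : ℝ) ^ l)⁻¹ * (N : ℝ) ^ j * (((N : ℝ) ^ n)⁻¹ * ∫ x, ‖iteratedFDeriv ℝ j u x‖) := by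
    intro c
    simp only [hp c]
    constructor
    · exact (((hint.comp_smul hNr.ne').comp_add_right (-c))).const_mul _
    · rw [integral_const_mul, integral_add_right_eq_self (μ := volume)
        (fun y => (fun w => ‖iteratedFDeriv ℝ j u w‖) ((N : ℝ) • y)) (-c),
        Measure.integral_comp_smul volume (fun w => ‖iteratedFDeriv ℝ j u w‖)]
      simp
  calc ∫ x, ‖iteratedFDeriv ℝ j (glue N l fun _ : Fin n → Fin N => u) x‖
      ≤ ∫ x, ∑ i : Fin n → Fin N, ‖iteratedFDeriv ℝ j (piece N l (gridc i) u) x‖ := by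
        refine integral_mono_of_nonneg (Eventually.of_forall fun _ => norm_nonneg _)
          (integrable_finsetSum _ fun i _ => (hpi _).1) (Eventually.of_forall fun x => ?_)
        simp only []
        unfold glue
        rw [iteratedFDeriv_fun_sum_apply]
        · exact norm_sum_le _ _
        · intro i _
          exact ((piece_sm h.1).of_le (WithTop.coe_le_coe.2 le_top)).contDiffAt
    _ = ∑ i : Fin n → Fin N, ((N : ℝ) ^ l)⁻¹ * (N : ℝ) ^ j *
          (((N : ℝ) ^ n)⁻¹ * ∫ x, ‖iteratedFDeriv ℝ j u x‖) := by
        rw [integral_finsetSum _ fun i _ => (hpi _).1]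
        exact Finset.sum_congr rfl fun i _ => (hpi _).2
    _ = ((N : ℝ) ^ l)⁻¹ * (N : ℝ) ^ j * ∫ x, ‖iteratedFDeriv ℝ j u x‖ := by
        rw [Finset.sum_const, nsmul_eq_mul, Finset.card_univ, card_grid]
        have : (N : ℝ) ^ n ≠ 0 := by positivity
        field_simp
    _ ≤ (N : ℝ)⁻¹ * ∫ x, ‖iteratedFDeriv ℝ j u x‖ := by
        refine mul_le_mul_of_nonneg_right ?_ (integral_nonneg fun _ => norm_nonneg _)
        rw [inv_mul_le_iff₀ (by positivity), ← div_eq_mul_inv, le_div_iff₀ hNr, ← pow_succ]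
        exact pow_le_pow_right₀ hN1 hjl

end Glue

/-! ## Quasiconvexification -/

section Qcv

variable {n : ℕ} {V U : Type*} [NormedAddCommGroup V] [NormedSpace ℝ V]
  [NormedAddCommGroup U] [NormedSpace ℝ U]

def LipB (Φ : V → ℝ) (L : ℝ) : Prop := 0 ≤ L ∧ ∀ a b, Φ a ≤ Φ b + L * ‖a - b‖

theorem LipB.continuous {Φ : V → ℝ} {L : ℝ} (h : LipB Φ L) : Continuous Φ := by
  have : LipschitzWith ⟨L, h.1⟩ Φ := by
    refine LipschitzWith.of_le_add_mul _ fun a b => ?_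
    rw [dist_eq_norm]
    exact h.2 a b
  exact this.continuous

def cubeI (B : (Fin n → ℕ) → (U →L[ℝ] V)) (l : ℕ) (Φ : V → ℝ) (y : V) (u : Dom n → U) : ℝ :=
  ∫ x in unitCube n, Φ (y + opApply B l u x)

def qcv (B : (Fin n → ℕ) → (U →L[ℝ] V)) (l : ℕ) (Φ : V → ℝ) (y : V) : ℝ :=
  ⨅ u : {u : Dom n → U // CcSmooth (unitCube n) u}, cubeI B l Φ y u.1

theorem int_le_add {F G : Dom n → ℝ} (hF : Continuous F) (hG : Continuous G) {c : ℝ}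
    (h : ∀ x ∈ unitCube n, F x ≤ G x + c) :
    ∫ x in unitCube n, F x ≤ (∫ x in unitCube n, G x) + c := by
  have h1 : ∫ x in unitCube n, (G x + c) = (∫ x in unitCube n, G x) + c := by
    rw [integral_add (cube_integrable hG) (integrable_const c)]
    simp
  rw [← h1]
  exact setIntegral_mono_on (cube_integrable hF) (cube_integrable (hG.add continuous_const))
    measurableSet_unitCube h

theorem ccSmooth_zero : CcSmooth (unitCube n) (fun _ : Dom n => (0 : U)) := by
  refine ⟨contDiff_const, HasCompactSupport.zero, ?_⟩
  have : tsupport (fun _ : Dom n => (0 : U)) = ∅ := by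
    rw [tsupport_eq_empty_iff]; rfl
  rw [this]; exact Set.empty_subset _

theorem CcSmooth.add {u v : Dom n → U} (hu : CcSmooth (unitCube n) u)
    (hv : CcSmooth (unitCube n) v) : CcSmooth (unitCube n) (fun x => u x + v x) := by
  refine ⟨ContDiff.add hu.1 hv.1, hu.2.1.add hv.2.1, ?_⟩
  refine (tsupport_add u v).trans (Set.union_subset hu.2.2 hv.2.2)

instance : Nonempty {u : Dom n → U // CcSmooth (unitCube n) u} := ⟨⟨_, ccSmooth_zero⟩⟩

variable {B : (Fin n → ℕ) → (U →L[ℝ] V)} {l : ℕ} {Φ : V → ℝ} {L : ℝ}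

theorem cubeI_lip (h : LipB Φ L) (a b : V) {u : Dom n → U} (hu : Sm u) :
    cubeI B l Φ a u ≤ cubeI B l Φ b u + L * ‖a - b‖ := by
  have := (hu.opApply (B := B) (l := l)).continuous
  have hΦ := h.continuous
  refine int_le_add (by fun_prop) (by fun_prop) fun x _ => ?_
  refine (h.2 _ (b + opApply B l u x)).trans_eq ?_
  congr 3
  abel

variable {z : V} {s : ℝ}

theorem qcv_bdd (h : LipB Φ L) (hs : ∀ u, CcSmooth (unitCube n) u → s ≤ cubeI B l Φ z u) (y : V) :
    BddBelow (Set.range fun u : {u : Dom n → U // CcSmooth (unitCube n) u} =>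
      cubeI B l Φ y u.1) := by
  refine ⟨s - L * ‖z - y‖, ?_⟩
  rintro _ ⟨u, rfl⟩
  have h1 := hs u.1 u.2
  have h2 := cubeI_lip (B := B) (l := l) h z y u.2.1
  simp only
  linarith

theorem qcv_le (h : LipB Φ L) (hs : ∀ u, CcSmooth (unitCube n) u → s ≤ cubeI B l Φ z u) (y : V)
    {u : Dom n → U} (hu : CcSmooth (unitCube n) u) : qcv B l Φ y ≤ cubeI B l Φ y u :=
  ciInf_le (qcv_bdd h hs y) ⟨u, hu⟩

theorem qcv_le_self (h : LipB Φ L) (hs : ∀ u, CcSmooth (unitCube n) u → s ≤ cubeI B l Φ z u)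
    (y : V) : qcv B l Φ y ≤ Φ y := by
  refine (qcv_le h hs y ccSmooth_zero).trans_eq ?_
  simp [cubeI, opApply_zero]

theorem le_qcv (hs : ∀ u, CcSmooth (unitCube n) u → s ≤ cubeI B l Φ z u) : s ≤ qcv B l Φ z :=
  le_ciInf fun u => hs u.1 u.2

theorem qcv_near (y : V) {ε : ℝ} (hε : 0 < ε) :
    ∃ u : Dom n → U, CcSmooth (unitCube n) u ∧ cubeI B l Φ y u < qcv B l Φ y + ε := by
  obtain ⟨u, hu⟩ := exists_lt_of_ciInf_lt (lt_add_of_pos_right (qcv B l Φ y) hε)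
  exact ⟨u.1, u.2, hu⟩

theorem qcv_lip (h : LipB Φ L) (hs : ∀ u, CcSmooth (unitCube n) u → s ≤ cubeI B l Φ z u) :
    LipB (qcv B l Φ) L := by
  refine ⟨h.1, fun a b => ?_⟩
  refine le_of_forall_pos_le_add fun ε hε => ?_
  obtain ⟨u, hu, hlt⟩ := qcv_near (B := B) (l := l) (Φ := Φ) b hε
  have h1 := qcv_le h hs a hu
  have h2 := cubeI_lip (B := B) (l := l) h a b hu.1
  linarith

theorem opApply_hcs {u : Dom n → U} (hu : HasCompactSupport u) :
    HasCompactSupport (opApply B l u) :=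
  hu.mono' ((subset_tsupport _).trans tsupport_opApply)

theorem qcv_cc (h : LipB Φ L) (hs : ∀ u, CcSmooth (unitCube n) u → s ≤ cubeI B l Φ z u)
    (y : V) {u : Dom n → U} (hu : CcSmooth (unitCube n) u) :
    qcv B l Φ y ≤ cubeI B l (qcv B l Φ) y u := by
  set Q := qcv B l Φ with hQ
  have hQL : LipB Q L := qcv_lip h hs
  have hQc := hQL.continuous
  have hΦc := h.continuous
  set g := opApply B l u with hg
  have hgc : Continuous g := (Sm.opApply (u := u) hu.1).continuous
  have hgu : UniformContinuous g := hgc.uniformContinuous_of_tendsto_cocompact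
    (opApply_hcs hu.2.1).is_zero_at_infty
  suffices H : ∀ ε > 0, Q y ≤ cubeI B l Q y u + (1 + 2 * L) * ε by
    refine le_of_forall_pos_le_add fun ε hε => ?_
    have h0 : 0 < 1 + 2 * L := by linarith [h.1]
    have := H (ε / (1 + 2 * L)) (by positivity)
    rwa [mul_div_cancel₀ _ h0.ne'] at this
  intro ε hε
  obtain ⟨δ, hδ, hgδ⟩ := Metric.uniformContinuous_iff.1 hgu ε hε
  obtain ⟨N, hN⟩ := exists_nat_gt (1 / δ)
  have hNr : (0 : ℝ) < N := lt_trans (by positivity) hN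
  have hN0 : 0 < N := by exact_mod_cast hNr
  have hclose : ∀ (i : Fin n → Fin N), ∀ x ∈ unitCube n,
      ‖g (gridc i + (N : ℝ)⁻¹ • x) - g (gridc i)‖ ≤ ε := by
    intro i x hx
    rw [← dist_eq_norm]
    refine (hgδ ?_).le
    rw [dist_eq_norm, add_sub_cancel_left, norm_smul, norm_inv, Real.norm_natCast]
    have hx1 : ‖x‖ ≤ 1 := by
      rw [pi_norm_le_iff_of_nonneg zero_le_one]
      intro j
      have := (Set.mem_univ_pi.1 hx) j
      rw [Real.norm_eq_abs, abs_le]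
      constructor <;> linarith [this.1, this.2]
    calc (N : ℝ)⁻¹ * ‖x‖ ≤ (N : ℝ)⁻¹ * 1 := by gcongr
      _ < δ := by
        rw [mul_one, inv_lt_comm₀ hNr hδ, ← one_div]; exact hN
  choose v hv hvlt using fun i : Fin n → Fin N =>
    qcv_near (B := B) (l := l) (Φ := Φ) (y + g (gridc i)) hε
  have hgl := glue_cc (l := l) hN0 hv
  have h1 : Q y ≤ cubeI B l Φ y (fun x => u x + glue N l v x) := qcv_le h hs y (hu.add hgl)
  have h2 : cubeI B l Φ y (fun x => u x + glue N l v x) =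
      ∑ i, ((N : ℝ) ^ n)⁻¹ * ∫ x in unitCube n,
        Φ (y + g (gridc i + (N : ℝ)⁻¹ • x) + opApply B l (v i) x) := by
    rw [← glue_integral hN0 hv B (H := fun x w => Φ (y + g x + w)) (by fun_prop)]
    unfold cubeI
    congr 1
    funext x
    rw [opApply_add hu.1 hgl.1, add_assoc]
  have h3 : cubeI B l Q y u = ∑ i : Fin n → Fin N, ((N : ℝ) ^ n)⁻¹ • ∫ x in unitCube n,
      Q (y + g (gridc i + (N : ℝ)⁻¹ • x)) :=
    grid_integral (F := fun x => Q (y + g x)) hN0 (cube_integrable (by fun_prop))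
  have hcard : ∑ i : Fin n → Fin N, ((N : ℝ) ^ n)⁻¹ * ((1 + 2 * L) * ε) = (1 + 2 * L) * ε := by
    rw [Finset.sum_const, Finset.card_univ, nsmul_eq_mul, card_grid]
    field_simp
  refine h1.trans ?_
  rw [h2, h3, ← hcard, ← Finset.sum_add_distrib]
  refine Finset.sum_le_sum fun i _ => ?_
  rw [smul_eq_mul, ← mul_add]
  refine mul_le_mul_of_nonneg_left ?_ (by positivity)
  have hvc : Continuous (opApply B l (v i)) := (Sm.opApply (u := v i) (hv i).1).continuous
  have h4 : ∫ x in unitCube n, Φ (y + g (gridc i + (N : ℝ)⁻¹ • x) + opApply B l (v i) x) ≤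
      cubeI B l Φ (y + g (gridc i)) (v i) + L * ε := by
    refine int_le_add (by fun_prop) (by fun_prop) fun x hx => ?_
    refine (h.2 _ (y + g (gridc i) + opApply B l (v i) x)).trans ?_
    have := mul_le_mul_of_nonneg_left (hclose i x hx) h.1
    have e : y + g (gridc i + (N : ℝ)⁻¹ • x) + opApply B l (v i) x -
      (y + g (gridc i) + opApply B l (v i) x) = g (gridc i + (N : ℝ)⁻¹ • x) - g (gridc i) := by
      abel
    rw [e]
    linarith
  have h5 : ∫ _ in unitCube n, Q (y + g (gridc i)) ≤
      (∫ x in unitCube n, Q (y + g (gridc i + (N : ℝ)⁻¹ • x))) + L * ε := by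
    refine int_le_add (by fun_prop) (by fun_prop) fun x hx => ?_
    refine (hQL.2 _ (y + g (gridc i + (N : ℝ)⁻¹ • x))).trans ?_
    have := mul_le_mul_of_nonneg_left (hclose i x hx) h.1
    rw [norm_sub_rev] at this
    have e : y + g (gridc i) - (y + g (gridc i + (N : ℝ)⁻¹ • x)) =
      g (gridc i) - g (gridc i + (N : ℝ)⁻¹ • x) := by abel
    rw [e]
    linarith
  have h6 : ∫ _ in unitCube n, Q (y + g (gridc i)) = Q (y + g (gridc i)) := by simp
  have h7 := hvlt i
  rw [h6] at h5
  linarith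

end Qcv

/-! ## Cutoff: from compactly supported to periodic test functions -/

section Cutoff

variable {n : ℕ} {V U : Type*} [NormedAddCommGroup V] [NormedSpace ℝ V]
  [NormedAddCommGroup U] [NormedSpace ℝ U]

theorem exists_cutoff {ε : ℝ} (hε : 0 < ε) : ∃ η : Dom n → ℝ, Sm η ∧ HasCompactSupport η ∧
    tsupport η ⊆ unitCube n ∧ (∀ x, 0 ≤ η x ∧ η x ≤ 1) ∧
    ∫ x in unitCube n, (1 - η x) ≤ ε := by
  have hvol : ENNReal.ofReal (1 - ε) < volume (unitCube n) := by
    rw [volume_unitCube, ENNReal.ofReal_lt_one]; linarith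
  obtain ⟨K, hKs, hK, hlt⟩ := isOpen_unitCube.exists_lt_isCompact hvol
  obtain ⟨f, hf0, hf1, hf⟩ := exists_contMDiffMap_zero_one_nhds_of_isClosed
    (n := (⊤ : ℕ∞)) (modelWithCornersSelf ℝ (Dom n))
    (s := (unitCube n)ᶜ) (t := K) isOpen_unitCube.isClosed_compl hK.isClosed
    (Set.disjoint_left.2 fun x hx hxK => hx (hKs hxK))
  have hsm : Sm (fun x => f x) := contMDiff_iff_contDiff.1 f.contMDiff
  have hts : tsupport (fun x => f x) ⊆ unitCube n := by
    intro x hx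
    by_contra hxc
    have h1 : ∀ᶠ y in 𝓝 x, f y = 0 := (eventually_nhdsSet_iff_forall.1 hf0) x hxc
    exact (notMem_tsupport_iff_eventuallyEq.2 h1) hx
  refine ⟨fun x => f x, hsm, ?_, hts, fun x => hf x, ?_⟩
  · exact isCompact_closedUnitCube.of_isClosed_subset (isClosed_tsupport _)
      (hts.trans unitCube_subset)
  · rw [integral_sub (integrable_const _) (cube_integrable hsm.continuous)]
    have h1 : ∫ x in K, (1 : ℝ) ≤ ∫ x in unitCube n, f x := by
      calc ∫ x in K, (1 : ℝ) = ∫ x in K, f x := by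
            refine setIntegral_congr_fun hK.measurableSet fun x hx => ?_
            exact (hf1.self_of_nhdsSet x hx).symm
        _ ≤ ∫ x in unitCube n, f x := by
            refine setIntegral_mono_set (cube_integrable hsm.continuous) ?_
              (LE.le.eventuallyLE hKs)
            exact Eventually.of_forall fun x => (hf x).1
    have h2 : 1 - ε ≤ ∫ x in K, (1 : ℝ) := by
      rw [setIntegral_const, smul_eq_mul, mul_one, Measure.real]
      exact (ENNReal.ofReal_le_iff_le_toReal hK.measure_lt_top.ne).1 hlt.le
    have h3 : ∫ x in unitCube n, (1 : ℝ) = 1 := by simp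
    rw [h3]; linarith

theorem mderiv_fam {ι : Type*} (R : (ι → Dom n → V) → Prop)
    (h : ∀ F j, R F → R (fun i => pderivDir j (F i))) {F : ι → Dom n → V} (h0 : R F)
    (α : Fin n → ℕ) : R (fun i => mderiv α (F i)) := by
  have key : ∀ L : List (Fin n), R (fun i => L.foldr (fun j f => (pderivDir j)^[α j] f) (F i)) := by
    intro L
    induction L with
    | nil => exact h0
    | cons j L ih =>
      simp only [List.foldr_cons]
      generalize α j = m
      induction m with
      | zero => exact ih
      | succ m ihm =>
        simp only [Function.iterate_succ_apply']
        exact h _ j ihm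
  exact key _

theorem mderiv_param {P : Type*} [NormedAddCommGroup P] [NormedSpace ℝ P] {F : P → Dom n → V}
    (hF : ContDiff ℝ ((⊤ : ℕ∞) : WithTop ℕ∞) (fun p : P × Dom n => F p.1 p.2)) (α : Fin n → ℕ) :
    ContDiff ℝ ((⊤ : ℕ∞) : WithTop ℕ∞) (fun p : P × Dom n => mderiv α (F p.1) p.2) := by
  refine mderiv_fam (fun F : P → Dom n → V =>
    ContDiff ℝ ((⊤ : ℕ∞) : WithTop ℕ∞) (fun p : P × Dom n => F p.1 p.2)) ?_ hF α
  intro F j hF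
  unfold pderivDir
  refine ContDiff.clm_apply ?_ contDiff_const
  refine ContDiff.fderiv (f := fun (p : P × Dom n) y => F p.1 y) (g := fun p => p.2)
    (m := ((⊤ : ℕ∞) : WithTop ℕ∞)) ?_ contDiff_snd (by simp)
  exact hF.comp ((contDiff_fst.comp contDiff_fst).prodMk contDiff_snd)

variable {B : (Fin n → ℕ) → (U →L[ℝ] V)} {l : ℕ}

theorem opApply_param {P : Type*} [NormedAddCommGroup P] [NormedSpace ℝ P] {F : P → Dom n → U}
    (hF : ContDiff ℝ ((⊤ : ℕ∞) : WithTop ℕ∞) (fun p : P × Dom n => F p.1 p.2)) :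
    Continuous (fun p : P × Dom n => opApply B l (F p.1) p.2) := by
  unfold opApply
  refine continuous_finsetSum _ fun α _ => ?_
  exact (B α).continuous.comp (mderiv_param hF α).continuous

theorem ZPeriodic.opApply {w : Dom n → U} (hw : ZPeriodic w) (hs : Sm w) :
    ZPeriodic (opApply B l w) := by
  intro x m
  rw [← opApply_translate hs]
  congr 1
  funext y
  exact hw y m

theorem opApply_smul_const (c : ℝ) {w : Dom n → U} (hs : Sm w) (x : Dom n) :
    opApply B l (fun x => c • w x) x = c • opApply B l w x := by
  unfold opApply
  rw [Finset.smul_sum]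
  refine Finset.sum_congr rfl fun α _ => ?_
  have := mderiv_clm (c • ContinuousLinearMap.id ℝ U) hs α
  simp only [_root_.smul_apply, ContinuousLinearMap.id_apply] at this
  rw [this, map_smul]

theorem cutoff_error {η : Dom n → ℝ} (hη : Sm η) {w : Dom n → U} (hw : ZPeriodic w) (hs : Sm w)
    {ε : ℝ} (hε : 0 < ε) : ∃ N0 : ℕ, ∀ N : ℕ, N0 ≤ N → 0 < N → ∀ x ∈ unitCube n,
      ‖opApply B l (fun x => ((N : ℝ) ^ l)⁻¹ • (η x • w ((N : ℝ) • x))) x -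
        η x • opApply B l w ((N : ℝ) • x)‖ ≤ ε := by
  let F : ℝ × Dom n → Dom n → U := fun p y => η (p.1 • y + p.2) • w y
  have hF : ContDiff ℝ ((⊤ : ℕ∞) : WithTop ℕ∞) (fun p : (ℝ × Dom n) × Dom n => F p.1 p.2) := by
    refine ContDiff.smul (ContDiff.comp hη ?_) (ContDiff.comp hs contDiff_snd)
    exact ((contDiff_fst.comp contDiff_fst).smul contDiff_snd).add
      (contDiff_snd.comp contDiff_fst)
  have hK := opApply_param (B := B) (l := l) hF
  have hcomp : IsCompact ((Metric.closedBall (0 : ℝ × Dom n) 2) ×ˢ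
      (Metric.closedBall (0 : Dom n) 1)) :=
    (isCompact_closedBall _ _).prod (isCompact_closedBall _ _)
  have hu := hcomp.uniformContinuousOn_of_continuous hK.continuousOn
  obtain ⟨δ, hδ, hδ'⟩ := Metric.uniformContinuousOn_iff.1 hu ε hε
  obtain ⟨N0, hN0⟩ := exists_nat_gt (1 / δ)
  refine ⟨N0, fun N hN hNpos x hx => ?_⟩
  have hNr : (0 : ℝ) < N := by exact_mod_cast hNpos
  have hN1 : (1 : ℝ) ≤ N := by exact_mod_cast hNpos
  have hNδ : (N : ℝ)⁻¹ < δ := by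
    rw [inv_lt_comm₀ hNr hδ, ← one_div]
    exact hN0.trans_le (by exact_mod_cast hN)
  have hNi : (N : ℝ)⁻¹ ≤ 1 := inv_le_one_of_one_le₀ hN1
  let m : Fin n → ℤ := fun i => ⌊N * x i⌋
  let mr : Dom n := fun i => (m i : ℝ)
  let y : Dom n := (N : ℝ) • x - mr
  have hy : ‖y‖ ≤ 1 := by
    rw [pi_norm_le_iff_of_nonneg zero_le_one]
    intro i
    have h1 := Int.floor_le (N * x i)
    have h2 := Int.lt_floor_add_one (N * x i)
    simp only [y, mr, m, Pi.sub_apply, Pi.smul_apply, smul_eq_mul, Real.norm_eq_abs]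
    rw [abs_le]; constructor <;> linarith
  have hx1 : ‖x‖ ≤ 1 := by
    rw [pi_norm_le_iff_of_nonneg zero_le_one]
    intro j
    have := (Set.mem_univ_pi.1 hx) j
    rw [Real.norm_eq_abs, abs_le]
    constructor <;> linarith [this.1, this.2]
  have hxe : x = (N : ℝ)⁻¹ • y + (N : ℝ)⁻¹ • mr := by
    rw [← smul_add]; simp only [y, sub_add_cancel]
    rw [smul_smul, inv_mul_cancel₀ hNr.ne', one_smul]
  have hdist : ‖(N : ℝ)⁻¹ • mr - x‖ ≤ (N : ℝ)⁻¹ := by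
    have : (N : ℝ)⁻¹ • mr - x = -((N : ℝ)⁻¹ • y) := by
      have h := sub_eq_of_eq_add' hxe
      rw [← h]; abel
    rw [this, norm_neg, norm_smul, norm_inv, Real.norm_natCast]
    calc (N : ℝ)⁻¹ * ‖y‖ ≤ (N : ℝ)⁻¹ * 1 := by gcongr
      _ = _ := mul_one _
  have hFs : ∀ p, Sm (F p) := fun p => hF.comp (contDiff_const.prodMk contDiff_id)
  have e1 : opApply B l (fun x => ((N : ℝ) ^ l)⁻¹ • (η x • w ((N : ℝ) • x))) x =
      opApply B l (F ((N : ℝ)⁻¹, (N : ℝ)⁻¹ • mr)) y := by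
    have := opApply_scale (B := B) (l := l) (hFs ((N : ℝ)⁻¹, (N : ℝ)⁻¹ • mr)) hNr.ne' (-mr) x
    rw [show (N : ℝ) • x + -mr = y from (sub_eq_add_neg _ _).symm] at this
    rw [← this]
    congr 1
    funext t
    have h1 : (N : ℝ)⁻¹ • ((N : ℝ) • t + -mr) + (N : ℝ)⁻¹ • mr = t := by
      rw [← smul_add, neg_add_cancel_right, smul_smul, inv_mul_cancel₀ hNr.ne', one_smul]
    have h2 : w ((N : ℝ) • t + -mr) = w ((N : ℝ) • t) := by
      have := hw ((N : ℝ) • t + -mr) m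
      rw [← this]
      congr 1
      exact neg_add_cancel_right _ mr
    simp only [F]
    rw [h1, h2]
  have e2 : η x • opApply B l w ((N : ℝ) • x) = opApply B l (F (0, x)) y := by
    have h1 : F (0, x) = fun t => η x • w t := by funext t; simp [F]
    rw [h1, opApply_smul_const _ hs]
    congr 1
    have := (hw.opApply (B := B) (l := l) hs) y m
    rw [← this]
    congr 1
    exact (sub_add_cancel _ mr).symm
  rw [e1, e2, ← dist_eq_norm]
  refine (hδ' ((((N : ℝ)⁻¹, (N : ℝ)⁻¹ • mr), y)) ?_ ((((0 : ℝ), x), y)) ?_ ?_).le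
  · refine ⟨?_, by simpa using hy⟩
    rw [mem_closedBall_zero_iff, Prod.norm_def]
    refine max_le ?_ ?_
    · simp only [norm_inv, Real.norm_natCast]; linarith
    · simp only
      have := norm_add_le ((N : ℝ)⁻¹ • mr - x) x
      rw [sub_add_cancel] at this
      linarith
  · refine ⟨?_, by simpa using hy⟩
    rw [mem_closedBall_zero_iff, Prod.norm_def]
    refine max_le ?_ ?_
    · simp
    · simp only; linarith
  · rw [Prod.dist_eq, Prod.dist_eq]
    simp only [dist_self, dist_eq_norm, sub_zero, norm_inv, Real.norm_natCast]
    exact max_lt (max_lt hNδ (hdist.trans_lt hNδ)) hδ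

theorem odd_integral {E : Type*} [NormedAddCommGroup E] [NormedSpace ℝ E] {g : Dom n → E}
    (hg : ZPeriodic g) (hc : Continuous g) (M : ℕ) :
    ∫ x in unitCube n, g (((2 * M + 1 : ℕ) : ℝ) • x) = ∫ x in unitCube n, g x := by
  have hN : 0 < 2 * M + 1 := by omega
  have hNr : ((2 * M + 1 : ℕ) : ℝ) ≠ 0 := by positivity
  rw [grid_integral hN (cube_integrable (by fun_prop))]
  have : ∀ i : Fin n → Fin (2 * M + 1), ∫ y in unitCube n,
      g (((2 * M + 1 : ℕ) : ℝ) • (gridc i + (((2 * M + 1 : ℕ) : ℝ))⁻¹ • y)) =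
      ∫ x in unitCube n, g x := by
    intro i
    congr 1
    funext y
    rw [smul_add, smul_smul, mul_inv_cancel₀ hNr, one_smul, add_comm]
    have := hg y (fun j => (i j : ℤ) - M)
    rw [← this]
    congr 2
    funext j
    simp only [gridc, Pi.smul_apply, smul_eq_mul]
    field_simp
    push_cast
    ring
  simp only [this]
  rw [Finset.sum_const, Finset.card_univ, ← Nat.cast_smul_eq_nsmul ℝ, card_grid, smul_smul,
    mul_inv_cancel₀ (by positivity), one_smul]

theorem per_of_cc {f : V → ℝ} {L : ℝ} (hf : LipB f L)
    (hcc : ∀ (y : V) (u : Dom n → U), CcSmooth (unitCube n) u → f y ≤ cubeI B l f y u)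
    (z : V) {w : Dom n → U} (hw : ZPeriodic w) (hs : Sm w) :
    f z ≤ ∫ x in unitCube n, f (z + opApply B l w x) := by
  have hfc := hf.continuous
  set g := opApply B l w with hg
  have hgp : ZPeriodic g := hw.opApply hs
  have hgc : Continuous g := (hs.opApply (B := B) (l := l)).continuous
  obtain ⟨C, hC0, hC⟩ := periodic_bdd hgp hgc
  suffices H : ∀ ε > 0, f z ≤ (∫ x in unitCube n, f (z + g x)) + L * (C + 1) * ε by
    refine le_of_forall_pos_le_add fun ε hε => ?_
    have h0 : 0 ≤ L * (C + 1) := mul_nonneg hf.1 (by linarith)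
    refine (H (ε / (L * (C + 1) + 1)) (by positivity)).trans ?_
    gcongr
    rw [mul_div_assoc', div_le_iff₀ (by linarith)]
    nlinarith
  intro ε hε
  obtain ⟨η, hη, hηc, hηs, hη01, hηint⟩ := exists_cutoff (n := n) hε
  obtain ⟨N0, hN0⟩ := cutoff_error (B := B) (l := l) hη hw hs hε
  have hN := hN0 (2 * N0 + 1) (by omega) (by omega)
  set N := 2 * N0 + 1 with hNdef
  set u : Dom n → U := fun x => ((N : ℝ) ^ l)⁻¹ • (η x • w ((N : ℝ) • x)) with hu
  have hwN : Sm (fun x : Dom n => w ((N : ℝ) • x)) := ContDiff.comp hs (contDiff_const_smul _)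
  have hus : Sm u := ContDiff.const_smul _ (ContDiff.smul hη hwN)
  have hsub : Function.support u ⊆ tsupport η := by
    intro x hx
    refine subset_tsupport _ fun h0 => hx ?_
    simp only [hu]
    rw [show η x = 0 from h0]; simp
  have hucc : CcSmooth (unitCube n) u := by
    refine ⟨hus, hηc.mono' hsub, ?_⟩
    exact (closure_minimal hsub (isClosed_tsupport _)).trans hηs
  have h1 := hcc z u hucc
  have hoc : Continuous (opApply B l u) := (hus.opApply (B := B) (l := l)).continuous
  have hηcont := hη.continuous
  have h2 : cubeI B l f z u ≤
      (∫ x in unitCube n, (f (z + g ((N : ℝ) • x)) + L * C * (1 - η x))) + L * ε := by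
    refine int_le_add (by fun_prop) (by fun_prop) fun x hx => ?_
    refine (hf.2 _ (z + g ((N : ℝ) • x))).trans ?_
    have e : z + opApply B l u x - (z + g ((N : ℝ) • x)) =
      (opApply B l u x - η x • g ((N : ℝ) • x)) + -((1 - η x) • g ((N : ℝ) • x)) := by
      rw [sub_smul, one_smul]; abel
    have h3 : ‖z + opApply B l u x - (z + g ((N : ℝ) • x))‖ ≤ ε + (1 - η x) * C := by
      rw [e]
      refine (norm_add_le _ _).trans (add_le_add (hN x hx) ?_)
      rw [norm_neg, norm_smul, Real.norm_eq_abs, abs_of_nonneg (by linarith [(hη01 x).2])]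
      exact mul_le_mul_of_nonneg_left (hC _) (by linarith [(hη01 x).2])
    have := mul_le_mul_of_nonneg_left h3 hf.1
    linarith
  rw [integral_add (cube_integrable (by fun_prop)) (cube_integrable (by fun_prop)),
    integral_const_mul, odd_integral (g := fun x => f (z + g x))
      (fun x m => by simp only [hgp x m]) (by fun_prop)] at h2
  have h4 : L * C * ∫ x in unitCube n, (1 - η x) ≤ L * C * ε :=
    mul_le_mul_of_nonneg_left hηint (mul_nonneg hf.1 hC0)
  linarith

end Cutoff

/-! ## Fourier analysis -/

section Fourier

variable {n : ℕ} {V U W : Type*} [NormedAddCommGroup V] [NormedSpace ℝ V]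
  [NormedAddCommGroup U] [NormedSpace ℝ U] [NormedAddCommGroup W] [NormedSpace ℝ W]

def cs (m : Fin n → ℤ) (θ : ℝ) : Dom n → ℝ :=
  fun x => Real.cos (2 * Real.pi * (∑ i, (m i : ℝ) * x i) + θ)

theorem cs_sm (m : Fin n → ℤ) (θ : ℝ) : Sm (cs m θ) := by
  unfold cs
  refine Real.contDiff_cos.comp ?_
  refine ContDiff.add (contDiff_const.mul ?_) contDiff_const
  exact ContDiff.sum fun i _ => contDiff_const.mul (contDiff_apply ℝ ℝ i)

theorem cs_per (m : Fin n → ℤ) (θ : ℝ) : ZPeriodic (cs m θ) := by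
  intro x p
  unfold cs
  have : 2 * Real.pi * (∑ i, (m i : ℝ) * (x + fun i => (p i : ℝ)) i) + θ =
      2 * Real.pi * (∑ i, (m i : ℝ) * x i) + θ + ((∑ i, m i * p i : ℤ) : ℝ) * (2 * Real.pi) := by
    simp only [Pi.add_apply, mul_add, Finset.sum_add_distrib]
    push_cast
    ring
  rw [this, Real.cos_add_int_mul_two_pi]

theorem cs_pderiv (m : Fin n → ℤ) (θ : ℝ) (j : Fin n) (x : Dom n) :
    HasFDerivAt (cs m θ) (fderiv ℝ (cs m θ) x) x ∧
    fderiv ℝ (cs m θ) x (Pi.single j 1) = 2 * Real.pi * m j * cs m (θ + Real.pi / 2) x := by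
  have hd : HasFDerivAt (cs m θ) (fderiv ℝ (cs m θ) x) x :=
    ((cs_sm m θ).differentiable x).hasFDerivAt
  refine ⟨hd, ?_⟩
  have h1 : HasFDerivAt (fun x : Dom n => 2 * Real.pi * (∑ i, (m i : ℝ) * x i) + θ)
      ((2 * Real.pi) • ∑ i, (m i : ℝ) • ContinuousLinearMap.proj (R := ℝ) (φ := fun _ : Fin n => ℝ) i) x := by
    refine HasFDerivAt.add_const θ (HasFDerivAt.const_mul ?_ _)
    refine HasFDerivAt.fun_sum fun i _ => ?_
    exact (hasFDerivAt_apply i x).const_mul _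
  have h2 := h1.cos
  have h3 : fderiv ℝ (cs m θ) x = _ := h2.fderiv
  rw [h3]
  simp only [cs, ← add_assoc, Real.cos_add_pi_div_two]
  simp only [_root_.smul_apply, _root_.sum_apply, ContinuousLinearMap.proj_apply, smul_eq_mul]
  have : ∑ i, (m i : ℝ) * (Pi.single j 1 : Dom n) i = m j := by
    rw [Finset.sum_eq_single j]
    · simp
    · intro b _ hb; simp [Pi.single_eq_of_ne hb]
    · simp
  rw [this]; ring

theorem pderiv_cs_smul (m : Fin n → ℤ) (θ : ℝ) (j : Fin n) {f : Dom n → V} (hf : Sm f) :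
    pderivDir j (fun x => cs m θ x • f x) = fun x => cs m θ x • pderivDir j f x +
      (2 * Real.pi * m j * cs m (θ + Real.pi / 2) x) • f x := by
  funext x
  have := (cs_pderiv m θ j x).1.smul (hf.differentiable x).hasFDerivAt
  unfold pderivDir
  rw [show (fun x => cs m θ x • f x) = cs m θ • f from rfl, this.fderiv]
  simp only [_root_.add_apply, _root_.smul_apply, ContinuousLinearMap.smulRight_apply,
    (cs_pderiv m θ j x).2]

theorem prod_pair (c : Fin n → ℝ) (α : Fin n → ℕ) :
    ((1 : ℝ × Multiplicative ℕ) * ∏ j, ((c j, Multiplicative.ofAdd 1) : ℝ × Multiplicative ℕ) ^ α j)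
      = (∏ j, c j ^ α j, Multiplicative.ofAdd (∑ j, α j)) := by
  rw [one_mul]
  refine Prod.ext ?_ ?_
  · rw [Prod.fst_prod]; simp
  · rw [Prod.snd_prod]
    simp only [Prod.pow_snd]
    apply Multiplicative.toAdd.injective
    rw [toAdd_prod]
    simp

theorem mderiv_cs (m : Fin n → ℤ) (θ : ℝ) (p : V) (α : Fin n → ℕ) :
    mderiv α (fun x => cs m θ x • p) = fun x =>
      (∏ j, (2 * Real.pi * m j) ^ α j) • (cs m (θ + (∑ j, α j : ℕ) * (Real.pi / 2)) x • p) := by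
  have := mderiv_ind (M := ℝ × Multiplicative ℕ) (V' := V)
    (fun j => (2 * Real.pi * m j, Multiplicative.ofAdd 1))
    (fun c (f : Dom n → V) _ => f = fun x =>
      c.1 • (cs m (θ + (c.2.toAdd : ℝ) * (Real.pi / 2)) x • p))
    (fun c f g j hf => by
      rw [hf]
      funext x
      have h1 := pderiv_cs_smul m (θ + (c.2.toAdd : ℝ) * (Real.pi / 2)) j
        (f := fun _ => c.1 • p) contDiff_const
      have h2 : (fun x => c.1 • (cs m (θ + (c.2.toAdd : ℝ) * (Real.pi / 2)) x • p)) =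
        fun x => cs m (θ + (c.2.toAdd : ℝ) * (Real.pi / 2)) x • c.1 • p := by
        funext x; rw [smul_comm]
      rw [h2, h1]
      simp only [pderivDir, fderiv_fun_const, Prod.fst_mul, Prod.snd_mul, toAdd_mul, toAdd_ofAdd]
      simp only [Pi.zero_apply, _root_.zero_apply, smul_zero, zero_add]
      rw [show θ + ((c.2.toAdd : ℕ) : ℝ) * (Real.pi / 2) + Real.pi / 2 =
        θ + ((c.2.toAdd + 1 : ℕ) : ℝ) * (Real.pi / 2) by push_cast; ring]
      rw [smul_smul, smul_smul]
      congr 1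
      ring) (c := 1) (u := fun x => cs m θ x • p) (v := fun x => cs m θ x • p)
      (by funext x; simp) α
  rw [prod_pair] at this
  exact this

theorem prod_pi (m : Fin n → ℤ) (c : ℝ) (α : Fin n → ℕ) :
    (∏ j, (c * m j) ^ α j) = c ^ (∑ j, α j) * ∏ j, (m j : ℝ) ^ α j := by
  simp only [mul_pow]
  rw [Finset.prod_mul_distrib, Finset.prod_pow_eq_pow_sum]

theorem opApply_cs (B : (Fin n → ℕ) → (U →L[ℝ] V)) (l : ℕ) (m : Fin n → ℤ) (θ : ℝ) (p : U)
    (x : Dom n) : opApply B l (fun x => cs m θ x • p) x =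
      ((2 * Real.pi) ^ l * cs m (θ + l * (Real.pi / 2)) x) •
        opSymbol B l (fun i => (m i : ℝ)) p := by
  unfold opApply opSymbol
  rw [_root_.sum_apply, Finset.smul_sum]
  refine Finset.sum_congr rfl fun α hα => ?_
  rw [mderiv_cs, prod_pi, mem_degSet hα]
  simp only [map_smul, _root_.smul_apply, smul_smul]
  congr 1
  ring

theorem integral_cs_mderiv [CompleteSpace V] (m : Fin n → ℤ) {v : Dom n → V} (hv : Sm v)
    (hp : ZPeriodic v) (α : Fin n → ℕ) (θ : ℝ) :
    ∫ x in unitCube n, cs m θ x • mderiv α v x =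
      (∏ j, (-(2 * Real.pi) * m j) ^ α j) •
        ∫ x in unitCube n, cs m (θ + (∑ j, α j : ℕ) * (Real.pi / 2)) x • v x := by
  have := mderiv_ind (M := ℝ × Multiplicative ℕ) (V' := V)
    (fun j => (-(2 * Real.pi) * m j, Multiplicative.ofAdd 1))
    (fun c (f : Dom n → V) _ => Sm f ∧ ZPeriodic f ∧ ∀ θ, ∫ x in unitCube n, cs m θ x • f x =
      c.1 • ∫ x in unitCube n, cs m (θ + (c.2.toAdd : ℝ) * (Real.pi / 2)) x • v x)
    (fun c f g j hf => by
      obtain ⟨h1, h2, h3⟩ := hf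
      refine ⟨h1.pderivDir j, h2.pderivDir j, fun θ => ?_⟩
      have hs : Sm (fun x => cs m θ x • f x) := ContDiff.smul (cs_sm m θ) h1
      have hper : ZPeriodic (fun x => cs m θ x • f x) := fun x q => by
        simp only [cs_per m θ x q, h2 x q]
      have h4 := integral_pderiv_periodic hper hs j
      rw [pderiv_cs_smul m θ j h1] at h4
      have hc1 := (cs_sm m θ).continuous
      have hc2 := (cs_sm m (θ + Real.pi / 2)).continuous
      have hc3 := h1.continuous
      have hc4 := (h1.pderivDir j).continuous
      rw [integral_add (cube_integrable (by fun_prop)) (cube_integrable (by fun_prop))] at h4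
      simp only [mul_smul] at h4
      rw [integral_smul, integral_smul, integral_smul, h3] at h4
      rw [eq_neg_of_add_eq_zero_left h4]
      simp only [Prod.fst_mul, Prod.snd_mul, toAdd_mul, toAdd_ofAdd]
      rw [show θ + Real.pi / 2 + ((c.2.toAdd : ℕ) : ℝ) * (Real.pi / 2) =
        θ + ((c.2.toAdd + 1 : ℕ) : ℝ) * (Real.pi / 2) by push_cast; ring]
      simp only [smul_smul, ← neg_smul]
      congr 1
      ring) (c := 1) (u := v) (v := v) ⟨hv, hp, fun θ => by simp⟩ α
  rw [prod_pair] at this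
  exact this.2.2 θ

theorem symbol_fourier [CompleteSpace V] [CompleteSpace W] {A : (Fin n → ℕ) → (V →L[ℝ] W)} {k : ℕ}
    (m : Fin n → ℤ) {v : Dom n → V} (hv : Sm v) (hp : ZPeriodic v)
    (hA : ∀ x, opApply A k v x = 0) (θ : ℝ) :
    opSymbol A k (fun i => (m i : ℝ)) (∫ x in unitCube n, cs m θ x • v x) = 0 := by
  set θ' := θ - k * (Real.pi / 2) with hθ
  have h1 : ∫ x in unitCube n, cs m θ' x • opApply A k v x = 0 := by simp [hA]
  have hc := (cs_sm m θ').continuous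
  have h2 : ∫ x in unitCube n, cs m θ' x • opApply A k v x =
      (-(2 * Real.pi)) ^ k • opSymbol A k (fun i => (m i : ℝ)) (∫ x in unitCube n, cs m θ x • v x) := by
    unfold opApply opSymbol
    simp only [Finset.smul_sum]
    rw [integral_finsetSum]
    · rw [_root_.sum_apply, Finset.smul_sum]
      refine Finset.sum_congr rfl fun α hα => ?_
      have hm := (hv.mderiv α).continuous
      have e : ∀ x, cs m θ' x • A α (mderiv α v x) = A α (cs m θ' x • mderiv α v x) := by
        intro x; rw [map_smul]
      simp only [e]
      rw [ContinuousLinearMap.integral_comp_comm _ (cube_integrable (by fun_prop)),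
        integral_cs_mderiv m hv hp, prod_pi, mem_degSet hα,
        show θ' + k * (Real.pi / 2) = θ by rw [hθ]; ring]
      simp only [map_smul, _root_.smul_apply, smul_smul]
    · intro α _
      have hm := (hv.mderiv α).continuous
      exact cube_integrable (by fun_prop)
  rw [h2] at h1
  refine (smul_eq_zero.1 h1).resolve_left ?_
  exact pow_ne_zero _ (neg_ne_zero.2 (by positivity))

/-- Trigonometric kernels. -/
def trig (n : ℕ) : Submodule ℝ (Dom n → ℝ) := Submodule.span ℝ (Set.range fun m => cs m 0)

theorem trig_mul {f g : Dom n → ℝ} (hf : f ∈ trig n) (hg : g ∈ trig n) : f * g ∈ trig n := by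
  have h1 : f * g ∈ trig n * trig n := Submodule.mul_mem_mul hf hg
  have h2 : trig n * trig n ≤ trig n := by
    unfold trig
    rw [Submodule.span_mul_span, Submodule.span_le]
    rintro _ ⟨_, ⟨a, rfl⟩, _, ⟨b, rfl⟩, rfl⟩
    have : cs a 0 * cs b 0 = (1 / 2 : ℝ) • cs (a + b) 0 + (1 / 2 : ℝ) • cs (a - b) 0 := by
      funext x
      simp only [cs, Pi.mul_apply, Pi.add_apply, Pi.smul_apply, smul_eq_mul, add_zero, Int.cast_add,
        Pi.sub_apply, Int.cast_sub, add_mul, sub_mul, Finset.sum_add_distrib, mul_add, mul_sub,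
        Finset.sum_sub_distrib, Real.cos_add, Real.cos_sub]
      ring
    simp only [this]
    exact Submodule.add_mem _ (Submodule.smul_mem _ _ (Submodule.subset_span ⟨_, rfl⟩))
      (Submodule.smul_mem _ _ (Submodule.subset_span ⟨_, rfl⟩))
  exact h2 h1

theorem trig_one : (1 : Dom n → ℝ) ∈ trig n := by
  refine Submodule.subset_span ⟨0, ?_⟩
  funext x; simp [cs]

def fej (n : ℕ) : Dom n → ℝ := fun x => ∏ i, (1 + Real.cos (2 * Real.pi * x i)) / 2

theorem fej_trig : fej n ∈ trig n := by
  have : fej n = ∏ i, (fun x : Dom n => (1 + Real.cos (2 * Real.pi * x i)) / 2) := by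
    funext x; simp [fej]
  rw [this]
  refine Finset.prod_induction _ (fun f => f ∈ trig n) (fun a b => trig_mul) trig_one fun i _ => ?_
  have : (fun x : Dom n => (1 + Real.cos (2 * Real.pi * x i)) / 2) =
      (1 / 2 : ℝ) • (1 : Dom n → ℝ) + (1 / 2 : ℝ) • cs (Pi.single i 1) 0 := by
    funext x
    have : ∑ j, ((Pi.single i 1 : Fin n → ℤ) j : ℝ) * x j = x i := by
      rw [Finset.sum_eq_single i]
      · simp
      · intro b _ hb; simp [Pi.single_eq_of_ne hb]
      · simp
    simp only [cs, Pi.add_apply, Pi.smul_apply, smul_eq_mul, this, Pi.one_apply, add_zero]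
    ring
  rw [this]
  exact Submodule.add_mem _ (Submodule.smul_mem _ _ trig_one)
      (Submodule.smul_mem _ _ (Submodule.subset_span ⟨_, rfl⟩))

theorem fej_pow_trig (N : ℕ) : fej n ^ N ∈ trig n := by
  induction N with
  | zero => rw [pow_zero]; exact trig_one
  | succ N ih => rw [pow_succ]; exact trig_mul ih fej_trig

theorem fej_cont : Continuous (fej n) := by unfold fej; fun_prop

theorem fej_per : ZPeriodic (fej n) := by
  intro x m
  unfold fej
  refine Finset.prod_congr rfl fun i _ => ?_
  rw [Pi.add_apply, mul_add, mul_comm (2 * Real.pi) (m i : ℝ), Real.cos_add_int_mul_two_pi]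

theorem fej_even (x : Dom n) : fej n (-x) = fej n x := by
  unfold fej
  refine Finset.prod_congr rfl fun i _ => ?_
  rw [Pi.neg_apply, mul_neg, Real.cos_neg]

theorem fej_nonneg (x : Dom n) : 0 ≤ fej n x := by
  refine Finset.prod_nonneg fun i _ => ?_
  have := Real.neg_one_le_cos (2 * Real.pi * x i)
  linarith

theorem fej_zero : fej n 0 = 1 := by simp [fej]

theorem fej_lt {x : Dom n} (hx : x ∈ closedUnitCube n) (h0 : x ≠ 0) : fej n x < fej n 0 := by
  obtain ⟨i, hi⟩ := Function.ne_iff.1 h0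
  rw [fej_zero]
  unfold fej
  rw [← Finset.mul_prod_erase _ _ (Finset.mem_univ i)]
  have h1 : (1 + Real.cos (2 * Real.pi * x i)) / 2 < 1 := by
    have hle := Real.cos_le_one (2 * Real.pi * x i)
    have hne : Real.cos (2 * Real.pi * x i) ≠ 1 := by
      intro h
      have hxi := (Set.mem_univ_pi.1 hx) i
      have hpi := Real.pi_pos
      have := (Real.cos_eq_one_iff_of_lt_of_lt (x := 2 * Real.pi * x i)
        (by nlinarith [hxi.1]) (by nlinarith [hxi.2])).1 h
      apply hi
      have h2 : x i = 0 := by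
        rcases mul_eq_zero.1 this with h | h
        · linarith
        · exact h
      simpa using h2
    have := lt_of_le_of_ne hle hne
    linarith
  have h2 : ∏ j ∈ Finset.univ.erase i, (1 + Real.cos (2 * Real.pi * x j)) / 2 ≤ 1 := by
    refine Finset.prod_le_one (fun j _ => ?_) fun j _ => ?_
    · linarith [Real.neg_one_le_cos (2 * Real.pi * x j)]
    · linarith [Real.cos_le_one (2 * Real.pi * x j)]
  have h3 : 0 ≤ ∏ j ∈ Finset.univ.erase i, (1 + Real.cos (2 * Real.pi * x j)) / 2 :=
    Finset.prod_nonneg fun j _ => by linarith [Real.neg_one_le_cos (2 * Real.pi * x j)]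
  have h4 : 0 ≤ (1 + Real.cos (2 * Real.pi * x i)) / 2 := by
    linarith [Real.neg_one_le_cos (2 * Real.pi * x i)]
  nlinarith

theorem trig_cont {φ : Dom n → ℝ} (h : φ ∈ trig n) : Continuous φ := by
  refine Submodule.span_induction ?_ ?_ ?_ ?_ h
  · rintro _ ⟨m, rfl⟩; exact (cs_sm m 0).continuous
  · exact continuous_const
  · intro a b _ _ ha hb; exact ha.add hb
  · intro c a _ ha; exact ha.const_smul c

theorem conv_trig [CompleteSpace V] [CompleteSpace W] {A : (Fin n → ℕ) → (V →L[ℝ] W)} {k : ℕ}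
    {B : (Fin n → ℕ) → (U →L[ℝ] V)} {l : ℕ} (hAB : ExactPotential A k B l)
    {v : Dom n → V} (hv : Sm v) (hp : ZPeriodic v) (h0 : ∫ x in unitCube n, v x = 0)
    (hA : ∀ x, opApply A k v x = 0) {φ : Dom n → ℝ} (hφ : φ ∈ trig n) :
    ∃ w : Dom n → U, Sm w ∧ ZPeriodic w ∧
      ∀ x, opApply B l w x = ∫ y in unitCube n, φ (x - y) • v y := by
  have hvc := hv.continuous
  refine Submodule.span_induction (p := fun φ _ => ∃ w : Dom n → U, Sm w ∧ ZPeriodic w ∧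
      ∀ x, opApply B l w x = ∫ y in unitCube n, φ (x - y) • v y) ?_ ?_ ?_ ?_ hφ
  · rintro _ ⟨m, rfl⟩
    have hsplit : ∀ x, ∫ y in unitCube n, cs m 0 (x - y) • v y =
        cs m 0 x • (∫ y in unitCube n, cs m 0 y • v y) +
        cs m (-(Real.pi / 2)) x • (∫ y in unitCube n, cs m (-(Real.pi / 2)) y • v y) := by
      intro x
      have hc1 := (cs_sm m 0).continuous
      have hc2 := (cs_sm m (-(Real.pi / 2))).continuous
      rw [← integral_smul, ← integral_smul,
        ← integral_add (cube_integrable (by fun_prop)) (cube_integrable (by fun_prop))]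
      congr 1
      funext y
      rw [smul_smul, smul_smul, ← add_smul]
      congr 1
      simp only [cs, ← sub_eq_add_neg, Real.cos_sub_pi_div_two, add_zero, Pi.sub_apply,
        mul_sub, Finset.sum_sub_distrib]
      rw [Real.cos_sub]
    by_cases hm : m = 0
    · refine ⟨fun _ => 0, contDiff_const, fun x p => rfl, fun x => ?_⟩
      rw [opApply_zero]
      have : ∀ y : Dom n, cs (0 : Fin n → ℤ) 0 y = 1 := by intro y; simp [cs]
      simp only [hm, this, one_smul, h0]
    · have hm' : (fun i => (m i : ℝ)) ≠ (0 : Dom n) := by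
        intro h
        apply hm
        funext i
        have := congrFun h i
        simpa using this
      have hr : ∀ θ, ∃ p : U, opSymbol B l (fun i => (m i : ℝ)) p =
          ∫ x in unitCube n, cs m θ x • v x := by
        intro θ
        have h1 : (∫ x in unitCube n, cs m θ x • v x) ∈
            LinearMap.ker (opSymbol A k (fun i => (m i : ℝ)) : V →ₗ[ℝ] W) :=
          symbol_fourier m hv hp hA θ
        rw [hAB _ hm'] at h1
        exact h1
      obtain ⟨p, hpp⟩ := hr 0
      obtain ⟨q, hq⟩ := hr (-(Real.pi / 2))
      have hs : ∀ (θ : ℝ) (r : U), Sm (fun x => cs m θ x • r) := fun θ r =>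
        ContDiff.smul (cs_sm m θ) contDiff_const
      have hpi : ((2 * Real.pi) ^ l)⁻¹ * (2 * Real.pi) ^ l = 1 :=
        inv_mul_cancel₀ (by positivity)
      have key : ∀ (θ : ℝ) (r : U) (x : Dom n), opApply B l (fun x => cs m (θ - l * (Real.pi / 2)) x •
          (((2 * Real.pi) ^ l)⁻¹ • r)) x = cs m θ x • opSymbol B l (fun i => (m i : ℝ)) r := by
        intro θ r x
        rw [opApply_cs, sub_add_cancel, map_smul, smul_smul]
        congr 1
        rw [mul_right_comm, mul_comm ((2 * Real.pi) ^ l), hpi, one_mul]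
      refine ⟨fun x => cs m (0 - l * (Real.pi / 2)) x • (((2 * Real.pi) ^ l)⁻¹ • p) +
        cs m (-(Real.pi / 2) - l * (Real.pi / 2)) x • (((2 * Real.pi) ^ l)⁻¹ • q),
        ContDiff.add (hs _ _) (hs _ _), ?_, fun x => ?_⟩
      · intro x t
        simp only [cs_per m _ x t]
      · rw [opApply_add (hs _ _) (hs _ _), key, key, hsplit, hpp, hq]
  · refine ⟨fun _ => 0, contDiff_const, fun x p => rfl, fun x => ?_⟩
    rw [opApply_zero]; simp
  · rintro a b ha hb ⟨w, hw, hwp, hwe⟩ ⟨w', hw', hwp', hwe'⟩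
    have hac := trig_cont ha
    have hbc := trig_cont hb
    refine ⟨fun x => w x + w' x, ContDiff.add hw hw', fun x m => by simp only [hwp x m, hwp' x m],
      fun x => ?_⟩
    rw [opApply_add hw hw', hwe, hwe',
      ← integral_add (cube_integrable (by fun_prop)) (cube_integrable (by fun_prop))]
    simp only [Pi.add_apply, add_smul]
  · rintro c a ha ⟨w, hw, hwp, hwe⟩
    refine ⟨fun x => c • w x, ContDiff.const_smul c hw, fun x m => by simp only [hwp x m],
      fun x => ?_⟩
    rw [opApply_smul_const c hw, hwe, ← integral_smul]
    simp only [Pi.smul_apply, smul_assoc]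

end Fourier

/-! ## The quasiconvexification is `𝒜`-quasiconvex -/

section QcvA

variable {n : ℕ} {V U W : Type*} [NormedAddCommGroup V] [NormedSpace ℝ V]
  [NormedAddCommGroup U] [NormedSpace ℝ U] [NormedAddCommGroup W] [NormedSpace ℝ W]

theorem zero_mem_unitCube : (0 : Dom n) ∈ unitCube n := by
  simp only [unitCube, Set.mem_univ_pi, Pi.zero_apply]
  intro i
  norm_num

theorem cube_closed_ae : (closedUnitCube n : Set (Dom n)) =ᵐ[volume] unitCube n := by
  have := (Measure.univ_pi_Ioo_ae_eq_Icc (μ := fun _ : Fin n => (volume : Measure ℝ))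
    (f := fun _ => -(1/2)) (g := fun _ => (1/2))).symm
  rw [← Set.pi_univ_Icc] at this
  exact this

theorem aqc_of_cc [CompleteSpace V] [CompleteSpace W] {A : (Fin n → ℕ) → (V →L[ℝ] W)} {k : ℕ}
    {B : (Fin n → ℕ) → (U →L[ℝ] V)} {l : ℕ} (hAB : ExactPotential A k B l)
    {f : V → ℝ} {L : ℝ} (hf : LipB f L)
    (hcc : ∀ (y : V) (u : Dom n → U), CcSmooth (unitCube n) u → f y ≤ cubeI B l f y u) :
    AQuasiconvex A k f := by
  have hfc := hf.continuous
  refine ⟨hfc, fun z v hv hp h0 hA => ?_⟩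
  have hvs : Sm v := hv
  have hvc := hvs.continuous
  obtain ⟨C, hC0, hC⟩ := periodic_bdd hp hvc
  have hφc := fej_cont (n := n)
  choose w hw hwp hwe using fun N : ℕ => conv_trig hAB hvs hp h0 hA (fej_pow_trig (n := n) N)
  let I : ℕ → ℝ := fun N => ∫ y in unitCube n, fej n y ^ N
  have hshift : ∀ N x, opApply B l (w N) x = ∫ y in unitCube n, fej n y ^ N • v (y + x) := by
    intro N x
    rw [hwe]
    have hper : ZPeriodic (fun y => fej n (y - x) ^ N • v y) := by
      intro y m
      have h1 : fej n (y + (fun i => (m i : ℝ)) - x) = fej n (y - x) := by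
        rw [add_sub_right_comm, fej_per]
      simp only [h1, hp y m]
    have h2 := integral_shift hper x
    simp only [add_sub_cancel_right] at h2
    rw [h2]
    congr 1
    funext y
    rw [Pi.pow_apply, ← neg_sub y x, fej_even]
  have hIpos : ∀ N, 0 ≤ I N := fun N => integral_nonneg fun y => pow_nonneg (fej_nonneg y) N
  let W' : ℕ → Dom n → V := fun N x => (I N)⁻¹ • opApply B l (w N) x
  have hW'eq : ∀ N, W' N = opApply B l (fun x => (I N)⁻¹ • w N x) := fun N => by
    funext x; rw [opApply_smul_const _ (hw N)]
  have hbound : ∀ N x, ‖W' N x‖ ≤ C := by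
    intro N x
    simp only [W']
    rw [norm_smul, norm_inv, Real.norm_of_nonneg (hIpos N), hshift]
    have h1 : ‖∫ y in unitCube n, fej n y ^ N • v (y + x)‖ ≤ I N * C := by
      rw [← integral_mul_const]
      refine norm_integral_le_of_norm_le (cube_integrable (by fun_prop)) ?_
      refine Eventually.of_forall fun y => ?_
      rw [norm_smul, Real.norm_of_nonneg (pow_nonneg (fej_nonneg y) N)]
      exact mul_le_mul_of_nonneg_left (hC _) (pow_nonneg (fej_nonneg y) N)
    calc (I N)⁻¹ * ‖∫ y in unitCube n, fej n y ^ N • v (y + x)‖ ≤ (I N)⁻¹ * (I N * C) :=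
          mul_le_mul_of_nonneg_left h1 (inv_nonneg.2 (hIpos N))
      _ ≤ C := by
        by_cases h : I N = 0
        · simp [h, hC0]
        · rw [inv_mul_cancel_left₀ h]
  have hlim : ∀ x, Tendsto (fun N => W' N x) atTop (𝓝 (v x)) := by
    intro x
    have h1 := tendsto_setIntegral_pow_smul_of_unique_maximum_of_isCompact_of_continuousOn
      (μ := (volume : Measure (Dom n))) (x₀ := (0 : Dom n)) (g := fun y => v (y + x))
      (isCompact_closedUnitCube (n := n)) (c := fej n) hφc.continuousOn
      (fun y hy hy0 => fej_lt hy hy0) (fun y _ => fej_nonneg y) (by rw [fej_zero]; exact one_pos)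
      (subset_closure (interior_maximal unitCube_subset isOpen_unitCube zero_mem_unitCube))
      (by fun_prop)
    simp only [zero_add, setIntegral_congr_set cube_closed_ae] at h1
    refine h1.congr fun N => ?_
    simp only [W', hshift, I]
  have hstep : ∀ N, f z ≤ ∫ x in unitCube n, f (z + W' N x) := by
    intro N
    rw [hW'eq]
    refine per_of_cc hf hcc z ?_ (ContDiff.const_smul _ (hw N))
    intro x m
    simp only [hwp N x m]
  refine ge_of_tendsto' (x := atTop) ?_ hstep
  refine tendsto_integral_of_dominated_convergence (fun _ => |f z| + L * C) ?_
    (integrable_const _) ?_ ?_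
  · intro N
    have hc : Continuous (W' N) := (hw N).opApply.continuous.const_smul _
    exact (by fun_prop : Continuous fun x => f (z + W' N x)).aestronglyMeasurable
  · intro N
    refine Eventually.of_forall fun x => ?_
    have h1 := hf.2 (z + W' N x) z
    have h2 := hf.2 z (z + W' N x)
    rw [add_sub_cancel_left] at h1
    rw [sub_add_cancel_left, norm_neg] at h2
    have h3 := mul_le_mul_of_nonneg_left (hbound N x) hf.1
    rw [Real.norm_eq_abs, abs_le]
    have h4 := le_abs_self (f z)
    have h5 := neg_abs_le (f z)
    constructor <;> linarith
  · refine Eventually.of_forall fun x => ?_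
    exact (hfc.tendsto _).comp ((hlim x).const_add z)

theorem qcv_aqc [CompleteSpace V] [CompleteSpace W] {A : (Fin n → ℕ) → (V →L[ℝ] W)} {k : ℕ}
    {B : (Fin n → ℕ) → (U →L[ℝ] V)} {l : ℕ} (hAB : ExactPotential A k B l)
    {Φ : V → ℝ} {L : ℝ} (h : LipB Φ L) {z : V} {s : ℝ}
    (hs : ∀ u, CcSmooth (unitCube n) u → s ≤ cubeI B l Φ z u) :
    AQuasiconvex A k (qcv B l Φ) :=
  aqc_of_cc hAB (qcv_lip h hs) fun y _ hu => qcv_cc h hs y hu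

theorem LipB.linearGrowth {f : V → ℝ} {L : ℝ} (hf : LipB f L) : LinearGrowth f := by
  refine ⟨|f 0| + L, fun z => ?_⟩
  have h1 := hf.2 z 0
  have h2 := hf.2 0 z
  rw [sub_zero] at h1
  rw [zero_sub, norm_neg] at h2
  have h4 := le_abs_self (f 0)
  have h5 := neg_abs_le (f 0)
  have h6 : 0 ≤ |f 0| * ‖z‖ := by positivity
  have h7 := hf.1
  rw [abs_le]
  constructor <;> nlinarith

/-! ### Periodization -/

theorem cc_of_aqc {A : (Fin n → ℕ) → (V →L[ℝ] W)} {k : ℕ} {f : V → ℝ}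
    (hf : AQuasiconvex A k f) (z : V) {v : Dom n → V} (hv : Sm v)
    (hsup : tsupport v ⊆ unitCube n) (h0 : ∫ x in unitCube n, v x = 0)
    (hA : ∀ x, opApply A k v x = 0) :
    f z ≤ ∫ x in unitCube n, f (z + v x) := by
  let r : Dom n → Dom n := fun x i => ((-round (x i) : ℤ) : ℝ)
  let P : Dom n → V := fun x => v (x + r x)
  have hPper : ZPeriodic P := by
    intro x m
    simp only [P]
    congr 1
    funext i
    simp only [r, Pi.add_apply, round_add_intCast]
    push_cast
    ring
  have hPin : ∀ x ∈ unitCube n, P x = v x := by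
    intro x hx
    have : r x = 0 := by
      funext i
      have hxi := (Set.mem_univ_pi.1 hx) i
      have : round (x i) = 0 := by
        rw [round_eq_zero_iff]
        exact ⟨by linarith [hxi.1], by linarith [hxi.2]⟩
      simp [r, this]
    simp only [P, this, add_zero]
  have hloc : ∀ x, ∃ b : Dom n, P =ᶠ[𝓝 x] fun y => v (y + b) := by
    intro x
    have hper : ∀ y, P y = P (y + r x) := fun y => (hPper y fun i => - round (x i)).symm
    refine ⟨r x, ?_⟩
    suffices H : P =ᶠ[𝓝 (x + r x)] v by
      have ht : Tendsto (fun y => y + r x) (𝓝 x) (𝓝 (x + r x)) :=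
        (continuous_id.add continuous_const).tendsto x
      filter_upwards [ht.eventually H] with y hy
      rw [hper, hy]
    set y := x + r x with hy
    by_cases hyc : y ∈ unitCube n
    · filter_upwards [isOpen_unitCube.mem_nhds hyc] with t ht using hPin t ht
    · -- both vanish nearby
      have hyb : ∀ i, |y i| ≤ 1 / 2 := by
        intro i
        have := abs_sub_round (x i)
        simpa [hy, r, ← sub_eq_add_neg] using this
      obtain ⟨i, hi⟩ : ∃ i, |y i| = 1 / 2 := by
        by_contra hcon
        push Not at hcon
        apply hyc
        rw [unitCube, Set.mem_univ_pi]
        intro i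
        have h1 := lt_of_le_of_ne (hyb i) (hcon i)
        rw [abs_lt] at h1
        exact ⟨by linarith [h1.1], h1.2⟩
      -- tsupport v is compact inside the cube
      have hcpt : IsCompact (tsupport v) :=
        isCompact_closedUnitCube.of_isClosed_subset (isClosed_tsupport _)
          (hsup.trans unitCube_subset)
      obtain ⟨δ, hδ, hδ'⟩ : ∃ δ > 0, ∀ t ∈ tsupport v, |t i| ≤ 1 / 2 - δ := by
        rcases (tsupport v).eq_empty_or_nonempty with he | hne
        · exact ⟨1, one_pos, by simp [he]⟩
        · obtain ⟨t0, ht0, hmax⟩ := hcpt.exists_isMaxOn hne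
            (f := fun t : Dom n => |t i|) (by fun_prop)
          have h1 : |t0 i| < 1 / 2 := by
            have := (Set.mem_univ_pi.1 (hsup ht0)) i
            rw [abs_lt]; exact ⟨by linarith [this.1], this.2⟩
          refine ⟨1 / 2 - |t0 i|, by linarith, fun t ht => ?_⟩
          have := hmax ht
          simp only [Set.mem_ofPred_eq] at this
          linarith
      have hball : ∀ᶠ t in 𝓝 y, |t i - y i| < δ := by
        have hc : Continuous fun t : Dom n => |t i - y i| := by fun_prop
        have := hc.tendsto y
        simp only [sub_self, abs_zero] at this
        exact this.eventually (gt_mem_nhds hδ)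
      filter_upwards [hball] with t ht
      have hfar : ∀ (q : Dom n) (c : ℤ), q i = t i + c → v q = 0 := by
        intro q c hq
        by_contra hne
        have hq1 := hδ' q (subset_tsupport _ hne)
        rw [hq] at hq1
        rw [abs_le] at hq1
        rw [abs_lt] at ht
        rcases abs_choice (y i) with h | h
        · rw [h] at hi
          rw [hi] at ht
          have h1 : ((c : ℤ) : ℝ) < 0 := by linarith
          have h2 : (-1 : ℝ) < c := by linarith
          have h1' : c < 0 := by exact_mod_cast h1
          have h2' : -1 < c := by exact_mod_cast h2
          omega
        · rw [h] at hi
          have hyi : y i = -(1/2) := by linarith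
          rw [hyi] at ht
          have h1 : (0 : ℝ) < c := by linarith
          have h2 : (c : ℝ) < 1 := by linarith
          have h1' : 0 < c := by exact_mod_cast h1
          have h2' : c < 1 := by exact_mod_cast h2
          omega
      rw [hfar t 0 (by simp)]
      exact hfar _ (-round (t i)) rfl
  have hPs : Sm P := by
    refine contDiff_iff_contDiffAt.2 fun x => ?_
    obtain ⟨b, hb⟩ := hloc x
    have : Sm (fun y => v (y + b)) := ContDiff.comp hv (contDiff_id.add contDiff_const)
    exact this.contDiffAt.congr_of_eventuallyEq hb
  have hPA : ∀ x, opApply A k P x = 0 := by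
    intro x
    obtain ⟨b, hb⟩ := hloc x
    rw [(opApply_congr hb).self_of_nhds, opApply_translate hv, hA]
  have hP0 : ∫ x in unitCube n, P x = 0 := by
    rw [← h0]
    exact setIntegral_congr_fun measurableSet_unitCube fun x hx => hPin x hx
  refine (hf.2 z P hPs hPper hP0 hPA).trans_eq ?_
  exact setIntegral_congr_fun measurableSet_unitCube fun x hx => by simp only [hPin x hx]

end QcvA

section Recession

variable {V : Type*} [NormedAddCommGroup V] [NormedSpace ℝ V]

def homG (G : V → ℝ) (s : ℝ) (z : V) : ℝ := (s + ‖z‖) * G ((s + ‖z‖)⁻¹ • z)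

def liftG (G : V → ℝ) (v : V) : ℝ := homG G 1 v

def comp1 (v : V) : V := (1 + ‖v‖)⁻¹ • v

lemma liftG_eq (G : V → ℝ) (v : V) : liftG G v = (1 + ‖v‖) * G (comp1 v) := rfl

lemma one_add_pos (v : V) : 0 < 1 + ‖v‖ := by positivity

lemma norm_comp1_lt (v : V) : ‖comp1 v‖ < 1 := by
  have := one_add_pos v
  rw [comp1, norm_smul, norm_inv, Real.norm_of_nonneg this.le, inv_mul_lt_iff₀ this]
  linarith

lemma comp1_mem (v : V) : comp1 v ∈ Metric.closedBall (0 : V) 1 := by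
  simpa using (norm_comp1_lt v).le

lemma comp1_surj {y : V} (hy : ‖y‖ < 1) : comp1 ((1 - ‖y‖)⁻¹ • y) = y := by
  have h : 0 < 1 - ‖y‖ := by linarith
  rw [comp1, norm_smul, norm_inv, Real.norm_of_nonneg h.le, smul_smul]
  have : (1 + (1 - ‖y‖)⁻¹ * ‖y‖)⁻¹ * (1 - ‖y‖)⁻¹ = 1 := by
    rw [← mul_inv]; field_simp; ring
  rw [this, one_smul]

lemma homG_one_sphere (G : V → ℝ) {w : V} (hw : ‖w‖ = 1) : homG G 0 w = G w := by
  simp [homG, hw]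

lemma continuous_comp1 : Continuous (comp1 : V → V) := by
  unfold comp1
  refine Continuous.smul (Continuous.inv₀ (by fun_prop) fun v => (one_add_pos v).ne') continuous_id

lemma continuous_liftG {G : V → ℝ} (hG : Continuous G) : Continuous (liftG G) := by
  have : liftG G = fun v => (1 + ‖v‖) * G (comp1 v) := rfl
  rw [this]
  have := continuous_comp1 (V := V)
  fun_prop

lemma homG_arg_mem {s : ℝ} (hs : 0 ≤ s) (z : V) : (s + ‖z‖)⁻¹ • z ∈ Metric.closedBall (0 : V) 1 := by
  rw [mem_closedBall_zero_iff, norm_smul, norm_inv, Real.norm_of_nonneg (by positivity)]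
  exact inv_mul_le_one_of_le₀ (by linarith) (by positivity)

lemma homG_bound {G : V → ℝ} {C : ℝ} (hC : ∀ y ∈ Metric.closedBall (0 : V) 1, |G y| ≤ C)
    {s : ℝ} (hs : 0 ≤ s) (z : V) : |homG G s z| ≤ C * (s + ‖z‖) := by
  rw [homG, abs_mul, abs_of_nonneg (by positivity), mul_comm]
  exact mul_le_mul_of_nonneg_right (hC _ (homG_arg_mem hs z)) (by positivity)

lemma homG_tendsto [ProperSpace V] {G : V → ℝ} (hG : Continuous G) (x : V) :
    Tendsto (fun p : ℝ × V => homG G p.1 p.2) (𝓝[≥] 0 ×ˢ 𝓝 x) (𝓝 (homG G 0 x)) := by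
  by_cases hx : x = 0
  · subst hx
    obtain ⟨C, hC⟩ := (isCompact_closedBall (0 : V) 1).exists_bound_of_continuousOn hG.continuousOn
    have h0 : homG G 0 (0 : V) = 0 := by simp [homG]
    rw [h0]
    have hlim : Tendsto (fun p : ℝ × V => C * (p.1 + ‖p.2‖)) (𝓝[≥] 0 ×ˢ 𝓝 0) (𝓝 0) := by
      have : Continuous (fun p : ℝ × V => C * (p.1 + ‖p.2‖)) := by fun_prop
      have h := this.tendsto (0, 0)
      simp only [norm_zero, add_zero, mul_zero] at h
      rw [nhds_prod_eq] at h
      exact h.mono_left (Filter.prod_mono nhdsWithin_le_nhds le_rfl)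
    refine squeeze_zero_norm' ?_ hlim
    have : ∀ᶠ s : ℝ in 𝓝[≥] 0, 0 ≤ s := self_mem_nhdsWithin
    filter_upwards [this.prod_inl (𝓝 (0 : V))] with p hp
    exact homG_bound hC hp _
  · have hc : ContinuousAt (fun p : ℝ × V => homG G p.1 p.2) (0, x) := by
      unfold homG
      refine ContinuousAt.mul (by fun_prop) (hG.continuousAt.comp (ContinuousAt.smul
        (ContinuousAt.inv₀ (by fun_prop) ?_) (by fun_prop)))
      simpa using hx
    have h := hc.tendsto
    rw [nhds_prod_eq] at h
    exact h.mono_left (Filter.prod_mono nhdsWithin_le_nhds le_rfl)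

lemma liftG_scale (G : V → ℝ) {t : ℝ} (ht : 0 < t) (z : V) :
    liftG G (t • z) / t = homG G t⁻¹ z := by
  have e : 1 + ‖t • z‖ = t * (t⁻¹ + ‖z‖) := by
    rw [norm_smul, Real.norm_of_nonneg ht.le, mul_add, mul_inv_cancel₀ ht.ne']
  have e2 : (t * (t⁻¹ + ‖z‖))⁻¹ * t = (t⁻¹ + ‖z‖)⁻¹ := by
    rw [mul_inv, mul_right_comm, inv_mul_cancel₀ ht.ne', one_mul]
  rw [liftG, homG, homG, e, smul_smul, e2, mul_assoc, mul_div_cancel_left₀ _ ht.ne']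

lemma liftG_tendsto [ProperSpace V] {G : V → ℝ} (hG : Continuous G) (x : V) :
    Tendsto (fun p : ℝ × V => liftG G (p.1 • p.2) / p.1) (atTop ×ˢ 𝓝 x) (𝓝 (homG G 0 x)) := by
  have h1 : Tendsto (fun t : ℝ => t⁻¹) atTop (𝓝[≥] 0) :=
    tendsto_inv_atTop_nhdsGT_zero.mono_right (nhdsWithin_mono _ Set.Ioi_subset_Ici_self)
  have h2 := (homG_tendsto hG x).comp (h1.prodMap (tendsto_id (x := 𝓝 x)))
  refine h2.congr' ?_
  filter_upwards [(eventually_gt_atTop (0 : ℝ)).prod_inl (𝓝 x)] with p hp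
  simp [liftG_scale G hp]

lemma liftG_hasRec [ProperSpace V] {G : V → ℝ} (hG : Continuous G) :
    HasRec (liftG G) (homG G 0) := by
  have hc : Continuous (homG G 0) := by
    refine continuous_iff_continuousAt.2 fun x => ?_
    have h := (homG_tendsto hG x).comp (g := fun p : ℝ × V => homG G p.1 p.2)
      (f := fun y : V => ((0 : ℝ), y)) (x := 𝓝 x) (by
        refine Tendsto.prodMk ?_ tendsto_id
        exact tendsto_nhdsWithin_iff.2 ⟨tendsto_const_nhds, by simp⟩)
    exact h
  unfold HasRec
  rw [tendstoLocallyUniformly_iff_forall_tendsto]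
  intro x
  have h1 : Tendsto (fun p : ℝ × V => homG G 0 p.2) (atTop ×ˢ 𝓝 x) (𝓝 (homG G 0 x)) :=
    (hc.tendsto x).comp tendsto_snd
  have := h1.prodMk_nhds (liftG_tendsto hG x)
  exact this.mono_right (nhds_le_uniformity _)

lemma liftG_growth [ProperSpace V] {G : V → ℝ} (hG : Continuous G) : LinearGrowth (liftG G) := by
  obtain ⟨C, hC⟩ := (isCompact_closedBall (0 : V) 1).exists_bound_of_continuousOn hG.continuousOn
  exact ⟨C, fun v => homG_bound hC zero_le_one v⟩

lemma liftG_memH [ProperSpace V] {G : V → ℝ} (hG : Continuous G) : MemH (liftG G) :=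
  ⟨continuous_liftG hG, liftG_growth hG, _, liftG_hasRec hG⟩

lemma rrec_of_hasRec {Φ g : V → ℝ} (h : HasRec Φ g) (w : V) : rrec Φ w = g w := by
  have := (TendstoLocallyUniformly.tendstoLocallyUniformlyOn (s := Set.univ) h).tendsto_at (Set.mem_univ w)
  exact this.limsup_eq

lemma rrec_liftG [ProperSpace V] {G : V → ℝ} (hG : Continuous G) {w : V} (hw : ‖w‖ = 1) :
    rrec (liftG G) w = G w := by
  rw [rrec_of_hasRec (liftG_hasRec hG), homG_one_sphere G hw]

lemma liftG_tendsto' [ProperSpace V] {G : V → ℝ} (hG : Continuous G) {w : V} (hw : ‖w‖ = 1) :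
    Tendsto (fun p : ℝ × V => liftG G (p.1 • p.2) / p.1) (atTop ×ˢ 𝓝 w) (𝓝 (G w)) := by
  have := liftG_tendsto hG w
  rwa [homG_one_sphere G hw] at this

lemma comp1_lip (a b : V) : (1 + ‖a‖) * ‖comp1 a - comp1 b‖ ≤ 2 * ‖a - b‖ := by
  have ha := one_add_pos a
  have hb := one_add_pos b
  have e : (1 + ‖a‖) • (comp1 a - comp1 b) = (a - b) + (‖b‖ - ‖a‖) • comp1 b := by
    have h1 : (1 + ‖a‖) • comp1 a = a := by
      rw [comp1, smul_smul, mul_inv_cancel₀ ha.ne', one_smul]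
    have h2 : (1 + ‖b‖) • comp1 b = b := by
      rw [comp1, smul_smul, mul_inv_cancel₀ hb.ne', one_smul]
    rw [smul_sub, h1]
    nth_rw 2 [← h2]
    module
  have h3 : (1 + ‖a‖) * ‖comp1 a - comp1 b‖ = ‖(a - b) + (‖b‖ - ‖a‖) • comp1 b‖ := by
    rw [← e, norm_smul, Real.norm_of_nonneg ha.le]
  rw [h3]
  calc _ ≤ ‖a - b‖ + ‖(‖b‖ - ‖a‖) • comp1 b‖ := norm_add_le _ _
    _ ≤ ‖a - b‖ + ‖a - b‖ * 1 := by
      rw [norm_smul]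
      gcongr
      · rw [← norm_sub_rev b a]; exact abs_norm_sub_norm_le b a
      · exact (norm_comp1_lt b).le
    _ = _ := by ring

lemma liftG_lip {G : V → ℝ} {L C : ℝ} (hL : 0 ≤ L)
    (hG : ∀ x ∈ Metric.closedBall (0 : V) 1, ∀ y ∈ Metric.closedBall (0 : V) 1,
      G x ≤ G y + L * ‖x - y‖)
    (hC : ∀ y ∈ Metric.closedBall (0 : V) 1, |G y| ≤ C) : LipB (liftG G) (C + 2 * L) := by
  have hC0 : 0 ≤ C := (abs_nonneg _).trans (hC 0 (by simp))
  refine ⟨by positivity, fun a b => ?_⟩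
  have ha := one_add_pos a
  have h1 := mul_le_mul_of_nonneg_left (hG _ (comp1_mem a) _ (comp1_mem b)) ha.le
  have h2 := comp1_lip a b
  have h3 : (‖a‖ - ‖b‖) * G (comp1 b) ≤ ‖a - b‖ * C := by
    refine (le_abs_self _).trans ?_
    rw [abs_mul]
    gcongr
    · exact abs_norm_sub_norm_le a b
    · exact hC _ (comp1_mem b)
  rw [liftG_eq, liftG_eq]
  nlinarith [mul_le_mul_of_nonneg_left h2 hL]

lemma liftG_lip_of_contDiff [FiniteDimensional ℝ V] {G : V → ℝ} (hG : ContDiff ℝ 1 G) :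
    ∃ L, LipB (liftG G) L := by
  have : ProperSpace V := FiniteDimensional.proper ℝ V
  obtain ⟨C, hC⟩ := (isCompact_closedBall (0 : V) 1).exists_bound_of_continuousOn
    hG.continuous.continuousOn
  obtain ⟨K, hK⟩ := hG.contDiffOn.exists_lipschitzOnWith one_ne_zero
    (convex_closedBall (0 : V) 1) (isCompact_closedBall (0 : V) 1)
  refine ⟨_, liftG_lip K.2 (fun x hx y hy => ?_) hC⟩
  have := hK.dist_le_mul x hx y hy
  rw [Real.dist_eq, dist_eq_norm] at this
  have h2 := (le_abs_self _).trans this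
  linarith!

end Recession

section Approx

variable {V : Type*} [NormedAddCommGroup V] [NormedSpace ℝ V]

lemma one_sub_norm_comp1 (v : V) : 1 - ‖comp1 v‖ = (1 + ‖v‖)⁻¹ := by
  have := one_add_pos v
  rw [comp1, norm_smul, norm_inv, Real.norm_of_nonneg this.le]
  field_simp; ring

lemma smul_comp1 (v : V) : (1 + ‖v‖) • comp1 v = v := by
  rw [comp1, smul_smul, mul_inv_cancel₀ (one_add_pos v).ne', one_smul]

/-- the ball representative of an integrand -/
def ballRep (f : V → ℝ) (y : V) : ℝ := (1 - ‖y‖) * f ((1 - ‖y‖)⁻¹ • y)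

lemma ballRep_comp1 (f : V → ℝ) (v : V) : ballRep f (comp1 v) = f v / (1 + ‖v‖) := by
  rw [ballRep, one_sub_norm_comp1, inv_inv, smul_comp1, inv_mul_eq_div]

lemma ballRep_continuousAt {f : V → ℝ} (hf : Continuous f) {y : V} (hy : ‖y‖ < 1) :
    ContinuousAt (ballRep f) y := by
  have h : 1 - ‖y‖ ≠ 0 := by linarith
  unfold ballRep
  exact ContinuousAt.mul (by fun_prop) (hf.continuousAt.comp (ContinuousAt.smul
    (ContinuousAt.inv₀ (by fun_prop) h) continuousAt_id))

def infc (f : V → ℝ) (m : ℝ) (y : V) : ℝ := ⨆ v : V, (f v / (1 + ‖v‖) - m * ‖comp1 v - y‖)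

variable {f : V → ℝ} {c : ℝ}

lemma infc_abs (hc : ∀ z, |f z| ≤ c * (1 + ‖z‖)) (v : V) : |f v / (1 + ‖v‖)| ≤ c := by
  rw [abs_div, abs_of_pos (one_add_pos v), div_le_iff₀ (one_add_pos v)]
  exact hc v

lemma infc_bdd (hc : ∀ z, |f z| ≤ c * (1 + ‖z‖)) {m : ℝ} (hm : 0 ≤ m) (y : V) :
    BddAbove (Set.range fun v : V => (f v / (1 + ‖v‖) - m * ‖comp1 v - y‖)) := by
  refine ⟨c, ?_⟩
  rintro _ ⟨v, rfl⟩
  have := (abs_le.1 (infc_abs hc v)).2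
  have h2 : 0 ≤ m * ‖comp1 v - y‖ := by positivity
  simp only
  linarith

lemma infc_lip (hc : ∀ z, |f z| ≤ c * (1 + ‖z‖)) {m : ℝ} (hm : 0 ≤ m) (y y' : V) :
    infc f m y ≤ infc f m y' + m * ‖y - y'‖ := by
  refine ciSup_le fun v => ?_
  have h1 := le_ciSup (infc_bdd hc hm y') v
  have h2 : ‖comp1 v - y'‖ ≤ ‖comp1 v - y‖ + ‖y - y'‖ := norm_sub_le_norm_sub_add_norm_sub _ _ _
  have h3 := mul_le_mul_of_nonneg_left h2 hm
  change _ ≤ infc f m y' at h1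
  linarith

lemma infc_cont (hc : ∀ z, |f z| ≤ c * (1 + ‖z‖)) {m : ℝ} (hm : 0 ≤ m) :
    Continuous (infc f m) :=
  LipB.continuous (L := m) ⟨hm, infc_lip hc hm⟩

lemma infc_ge (hc : ∀ z, |f z| ≤ c * (1 + ‖z‖)) {m : ℝ} (hm : 0 ≤ m) (v : V) :
    f v / (1 + ‖v‖) ≤ infc f m (comp1 v) := by
  have := le_ciSup (infc_bdd hc hm (comp1 v)) v
  simpa [infc] using this

lemma le_liftG_infc (hc : ∀ z, |f z| ≤ c * (1 + ‖z‖)) {m : ℝ} (hm : 0 ≤ m) (v : V) :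
    f v ≤ liftG (infc f m) v := by
  have := infc_ge hc hm v
  rw [div_le_iff₀ (one_add_pos v)] at this
  rw [liftG_eq]; linarith

lemma infc_le (hc : ∀ z, |f z| ≤ c * (1 + ‖z‖)) {m : ℝ} (hm : 0 ≤ m) (y : V) :
    infc f m y ≤ c := by
  refine ciSup_le fun v => ?_
  have := (abs_le.1 (infc_abs hc v)).2
  have h2 : 0 ≤ m * ‖comp1 v - y‖ := by positivity
  linarith

lemma infc_bound (hc : ∀ z, |f z| ≤ c * (1 + ‖z‖)) {m : ℝ} (hm : 0 ≤ m) :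
    ∀ y ∈ Metric.closedBall (0 : V) 1, |infc f m y| ≤ c := by
  intro y hy
  refine abs_le.2 ⟨?_, infc_le hc hm y⟩
  have hcl : IsClosed {y | -c ≤ infc f m y} := isClosed_le continuous_const (infc_cont hc hm)
  have hsub : Metric.ball (0 : V) 1 ⊆ {y | -c ≤ infc f m y} := by
    intro y hy
    have hy' : ‖y‖ < 1 := by simpa using hy
    have h := infc_ge hc hm ((1 - ‖y‖)⁻¹ • y)
    rw [comp1_surj hy'] at h
    exact (abs_le.1 (infc_abs hc _)).1.trans h
  have := closure_minimal hsub hcl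
  rw [closure_ball (0 : V) one_ne_zero] at this
  exact this hy

lemma infc_upper (hc : ∀ z, |f z| ≤ c * (1 + ‖z‖)) {y : V} {a δ : ℝ} (hδ : 0 < δ)
    (h : ∀ v, ‖comp1 v - y‖ < δ → f v / (1 + ‖v‖) ≤ a) :
    ∀ᶠ m : ℕ in atTop, infc f m y ≤ a := by
  obtain ⟨m0, hm0⟩ := exists_nat_ge ((c - a) / δ)
  filter_upwards [eventually_ge_atTop m0] with m hm
  refine ciSup_le fun v => ?_
  have hm' : (c - a) / δ ≤ m := hm0.trans (by exact_mod_cast hm)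
  rw [div_le_iff₀ hδ] at hm'
  by_cases hv : ‖comp1 v - y‖ < δ
  · have := h v hv
    have h2 : 0 ≤ (m : ℝ) * ‖comp1 v - y‖ := by positivity
    linarith
  · have := (abs_le.1 (infc_abs hc v)).2
    have h2 : (m : ℝ) * δ ≤ (m : ℝ) * ‖comp1 v - y‖ :=
      mul_le_mul_of_nonneg_left (not_lt.1 hv) (by positivity)
    linarith

lemma infc_tendsto (hf : Continuous f) (hc : ∀ z, |f z| ≤ c * (1 + ‖z‖)) (v : V) :
    Tendsto (fun m : ℕ => liftG (infc f m) v) atTop (𝓝 (f v)) := by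
  have key : Tendsto (fun m : ℕ => infc f m (comp1 v)) atTop (𝓝 (f v / (1 + ‖v‖))) := by
    refine tendsto_order.2 ⟨fun a ha => ?_, fun a ha => ?_⟩
    · exact Eventually.of_forall fun m => ha.trans_le (infc_ge hc (Nat.cast_nonneg m) v)
    · obtain ⟨b, hb1, hb2⟩ := exists_between ha
      have hcont := ballRep_continuousAt hf (norm_comp1_lt v)
      rw [← ballRep_comp1] at hb1
      have := hcont.eventually_lt continuousAt_const hb1
      obtain ⟨δ, hδ, h⟩ := Metric.eventually_nhds_iff.1 this
      filter_upwards [infc_upper hc (y := comp1 v) (a := b) hδ (fun v' hv' => by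
        have := h (y := comp1 v') (by rwa [dist_eq_norm])
        rw [ballRep_comp1] at this
        exact this.le)] with m hm
      exact hm.trans_lt hb2
  have := key.const_mul (1 + ‖v‖)
  rw [mul_div_cancel₀ _ (one_add_pos v).ne'] at this
  exact this

lemma urec_filter_le (hc : ∀ z, |f z| ≤ c * (1 + ‖z‖)) {m : ℝ} (hm : 0 ≤ m) (w : V) :
    ∀ᶠ p : ℝ × V in atTop ×ˢ 𝓝 w, f (p.1 • p.2) / p.1 ≤ liftG (infc f m) (p.1 • p.2) / p.1 := by
  filter_upwards [(eventually_gt_atTop (0 : ℝ)).prod_inl (𝓝 w)] with p hp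
  exact div_le_div_of_nonneg_right (le_liftG_infc hc hm _) hp.le

lemma urec_bddBelow (hc : ∀ z, |f z| ≤ c * (1 + ‖z‖)) (w : V) :
    ∀ᶠ p : ℝ × V in atTop ×ˢ 𝓝 w, -(c * (2 + ‖w‖)) ≤ f (p.1 • p.2) / p.1 := by
  have hc0 : 0 ≤ c := by
    have := (abs_nonneg _).trans (hc 0); simpa using this
  have h1 : ∀ᶠ z in 𝓝 w, ‖z‖ < ‖w‖ + 1 :=
    continuous_norm.continuousAt.eventually_lt continuousAt_const (by simp)
  filter_upwards [(eventually_ge_atTop (1 : ℝ)).prod_inl (𝓝 w), h1.prod_inr atTop] with p hp hp2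
  have hp0 : 0 < p.1 := by linarith
  rw [le_div_iff₀ hp0]
  have := (abs_le.1 (hc (p.1 • p.2))).1
  rw [norm_smul, Real.norm_of_nonneg hp0.le] at this
  refine le_trans ?_ this
  have h4 : 1 + p.1 * ‖p.2‖ ≤ p.1 * (2 + ‖w‖) := by nlinarith
  have := mul_le_mul_of_nonneg_left h4 hc0
  linarith

lemma urec_le_of_le [ProperSpace V] (hc : ∀ z, |f z| ≤ c * (1 + ‖z‖)) {G : V → ℝ} (hG : Continuous G)
    (hle : ∀ v, f v ≤ liftG G v) {w : V} (hw : ‖w‖ = 1) : urec f w ≤ G w := by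
  have ht := liftG_tendsto' hG hw
  have hle' : ∀ᶠ p : ℝ × V in atTop ×ˢ 𝓝 w, f (p.1 • p.2) / p.1 ≤ liftG G (p.1 • p.2) / p.1 := by
    filter_upwards [(eventually_gt_atTop (0 : ℝ)).prod_inl (𝓝 w)] with p hp
    exact div_le_div_of_nonneg_right (hle _) hp.le
  rw [urec, ← ht.limsup_eq]
  exact limsup_le_limsup hle' (isCoboundedUnder_le_of_eventually_le _ (urec_bddBelow hc w))
    ht.isBoundedUnder_le

lemma infc_tendsto_sphere [ProperSpace V] (hc : ∀ z, |f z| ≤ c * (1 + ‖z‖))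
    {w : V} (hw : ‖w‖ = 1) :
    Tendsto (fun m : ℕ => infc f m w) atTop (𝓝 (urec f w)) := by
  refine tendsto_order.2 ⟨fun a ha => ?_, fun a ha => ?_⟩
  · exact Eventually.of_forall fun m => ha.trans_le
      (urec_le_of_le hc (infc_cont hc (Nat.cast_nonneg m)) (le_liftG_infc hc (Nat.cast_nonneg m)) hw)
  · obtain ⟨b, hb1, hb2⟩ := exists_between ha
    have hbd : IsBoundedUnder (· ≤ ·) (atTop ×ˢ 𝓝 w) (fun p : ℝ × V => f (p.1 • p.2) / p.1) :=
      (liftG_tendsto' (infc_cont hc zero_le_one) hw).isBoundedUnder_le.mono_le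
        (urec_filter_le hc zero_le_one w)
    have hev := eventually_lt_of_limsup_lt hb1 hbd
    obtain ⟨p1, h1, p2, h2, h12⟩ := eventually_prod_iff.1 hev
    obtain ⟨T, hT⟩ := eventually_atTop.1 h1
    obtain ⟨δ, hδ, h2⟩ := Metric.eventually_nhds_iff.1 h2
    have hT1 : 0 < max T 1 := by positivity
    have hup : ∀ v, ‖comp1 v - w‖ < min δ (max T 1)⁻¹ → f v / (1 + ‖v‖) ≤ b := by
      intro v hv
      have hv1 := hv.trans_le (min_le_left _ _)
      have hv2 := hv.trans_le (min_le_right _ _)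
      have h3 : 1 - ‖comp1 v‖ < (max T 1)⁻¹ := by
        refine lt_of_le_of_lt ?_ hv2
        rw [← hw, norm_sub_rev]; exact norm_sub_norm_le _ _
      rw [one_sub_norm_comp1, inv_lt_inv₀ (one_add_pos v) hT1] at h3
      have := h12 (hT (1 + ‖v‖) ((le_max_left _ _).trans h3.le))
        (h2 (y := comp1 v) (by rwa [dist_eq_norm]))
      simp only [smul_comp1] at this
      exact this.le
    filter_upwards [infc_upper hc (y := w) (a := b) (δ := min δ (max T 1)⁻¹) (by positivity)
      hup] with m hm
    exact hm.trans_lt hb2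

variable [ProperSpace V] [MeasurableSpace V] [BorelSpace V]

lemma growth_integrable {nu0 : Measure V} [IsFiniteMeasure nu0]
    (hmom : Integrable (fun v : V => ‖v‖) nu0) (hf : Continuous f)
    (hc : ∀ z, |f z| ≤ c * (1 + ‖z‖)) : Integrable f nu0 := by
  have : FiniteDimensional ℝ V := FiniteDimensional.of_locallyCompactSpace ℝ
  have : SecondCountableTopology V := by infer_instance
  exact Integrable.mono' (((integrable_const (1 : ℝ)).add hmom).const_mul c)
    hf.aestronglyMeasurable (Eventually.of_forall hc)

lemma urec_bound (hc : ∀ z, |f z| ≤ c * (1 + ‖z‖)) {w : V} (hw : ‖w‖ = 1) : |urec f w| ≤ c :=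
  le_of_tendsto' (infc_tendsto_sphere hc hw).abs fun m =>
    infc_bound hc (Nat.cast_nonneg m) w (by simp [hw])

lemma urec_integrable {nuInf : Measure (Metric.sphere (0 : V) 1)} [IsFiniteMeasure nuInf]
    (hc : ∀ z, |f z| ≤ c * (1 + ‖z‖)) :
    Integrable (fun w : Metric.sphere (0 : V) 1 => urec f (w : V)) nuInf := by
  have hs : ∀ w : Metric.sphere (0 : V) 1, ‖(w : V)‖ = 1 := fun w => by simp
  refine Integrable.mono' (integrable_const c) ?_ (Eventually.of_forall fun w => urec_bound hc (hs w))
  refine aestronglyMeasurable_of_tendsto_ae atTop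
    (f := fun (m : ℕ) (w : Metric.sphere (0 : V) 1) => infc f m (w : V)) (fun m => ?_)
    (Eventually.of_forall fun w => infc_tendsto_sphere hc (hs w))
  exact ((infc_cont hc (Nat.cast_nonneg m)).comp continuous_subtype_val).aestronglyMeasurable

lemma infc_lim {nu0 : Measure V} [IsFiniteMeasure nu0]
    {nuInf : Measure (Metric.sphere (0 : V) 1)} [IsFiniteMeasure nuInf]
    (hmom : Integrable (fun v : V => ‖v‖) nu0) (hf : Continuous f)
    (hc : ∀ z, |f z| ≤ c * (1 + ‖z‖)) :
    Tendsto (fun m : ℕ => (∫ v, liftG (infc f m) v ∂nu0) + ∫ w, infc f m (w : V) ∂nuInf) atTop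
      (𝓝 ((∫ v, f v ∂nu0) + ∫ w, urec f (w : V) ∂nuInf)) := by
  have : FiniteDimensional ℝ V := FiniteDimensional.of_locallyCompactSpace ℝ
  have hs : ∀ w : Metric.sphere (0 : V) 1, ‖(w : V)‖ = 1 := fun w => by simp
  refine Tendsto.add ?_ ?_
  · refine tendsto_integral_of_dominated_convergence (fun v => c * (1 + ‖v‖))
      (fun m => (continuous_liftG (infc_cont hc (Nat.cast_nonneg m))).aestronglyMeasurable)
      (((integrable_const (1 : ℝ)).add hmom).const_mul c)
      (fun m => Eventually.of_forall fun v =>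
        homG_bound (infc_bound hc (Nat.cast_nonneg m)) zero_le_one v)
      (Eventually.of_forall fun v => infc_tendsto hf hc v)
  · refine tendsto_integral_of_dominated_convergence (fun _ => c)
      (fun m => ((infc_cont hc (Nat.cast_nonneg m)).comp continuous_subtype_val).aestronglyMeasurable)
      (integrable_const c)
      (fun m => Eventually.of_forall fun w =>
        infc_bound hc (Nat.cast_nonneg m) _ (by simp))
      (Eventually.of_forall fun w => infc_tendsto_sphere hc (hs w))

end Approx

section Dense

variable {V : Type*} [NormedAddCommGroup V]

lemma memH_rep [NormedSpace ℝ V] {Φ : V → ℝ} (h : MemH Φ) :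
    ∃ G : V → ℝ, ContinuousOn G (Metric.closedBall (0 : V) 1) ∧
      (∀ v, Φ v = (1 + ‖v‖) * G (comp1 v)) ∧ ∀ w, ‖w‖ = 1 → rrec Φ w = G w := by
  classical
  obtain ⟨hΦ, -, g, hg⟩ := h
  have hgc : Continuous g := by
    refine TendstoLocallyUniformly.continuous hg ?_
    exact Eventually.frequently (Eventually.of_forall fun t => by fun_prop)
  refine ⟨fun y => if ‖y‖ < 1 then ballRep Φ y else g y, ?_, fun v => ?_, fun w hw => ?_⟩
  · intro y hy
    by_cases hy1 : ‖y‖ < 1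
    · refine ContinuousAt.continuousWithinAt ?_
      refine (ballRep_continuousAt hΦ hy1).congr ?_
      have : ∀ᶠ y' in 𝓝 y, ‖y'‖ < 1 :=
        continuous_norm.continuousAt.eventually_lt continuousAt_const hy1
      filter_upwards [this] with y' hy'
      rw [if_pos hy']
    · have hyn : ‖y‖ = 1 := le_antisymm (by simpa using hy) (not_lt.1 hy1)
      have hU : Metric.closedBall (0 : V) 1 = Metric.ball 0 1 ∪ Metric.sphere 0 1 :=
        Metric.ball_union_sphere.symm
      rw [hU]
      refine ContinuousWithinAt.union ?_ ?_
      · unfold ContinuousWithinAt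
        simp only [if_neg hy1]
        have ht : Tendsto (fun y' : V => (1 - ‖y'‖)⁻¹) (𝓝[Metric.ball 0 1] y) atTop := by
          refine tendsto_inv_nhdsGT_zero.comp ?_
          refine tendsto_nhdsWithin_iff.2 ⟨?_, ?_⟩
          · have : Continuous fun y' : V => 1 - ‖y'‖ := by fun_prop
            have h2 := this.tendsto y
            rw [hyn, sub_self] at h2
            exact h2.mono_left nhdsWithin_le_nhds
          · filter_upwards [self_mem_nhdsWithin] with y' hy'
            have : ‖y'‖ < 1 := by simpa using hy'
            exact sub_pos.2 this
        have hi : Tendsto (fun y' : V => y') (𝓝[Metric.ball 0 1] y) (𝓝 y) :=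
          tendsto_id.mono_left nhdsWithin_le_nhds
        have h1 := ((tendstoLocallyUniformly_iff_forall_tendsto.1 hg) y).comp (ht.prodMk hi)
        have h2 : Tendsto (fun y' : V => g y') (𝓝[Metric.ball 0 1] y) (𝓝 (g y)) :=
          (hgc.tendsto y).mono_left nhdsWithin_le_nhds
        have h3 := h2.congr_uniformity h1
        refine h3.congr' ?_
        filter_upwards [self_mem_nhdsWithin] with y' hy'
        have : ‖y'‖ < 1 := by simpa using hy'
        rw [if_pos this, ballRep, div_inv_eq_mul, mul_comm]
      · refine (hgc.continuousWithinAt).congr (fun y' hy' => ?_) (if_neg hy1)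
        have : ‖y'‖ = 1 := by simpa using hy'
        rw [if_neg (by simp [this])]
  · simp only
    rw [if_pos (norm_comp1_lt v), ballRep_comp1, mul_div_cancel₀ _ (one_add_pos v).ne']
  · simp only
    rw [if_neg (by simp [hw]), rrec_of_hasRec hg]

variable [InnerProductSpace ℝ V] [FiniteDimensional ℝ V]

def smAlg (V : Type*) [NormedAddCommGroup V] [InnerProductSpace ℝ V] :
    Subalgebra ℝ C(Metric.closedBall (0 : V) 1, ℝ) where
  carrier := {G | ∃ g : V → ℝ, ContDiff ℝ 1 g ∧ ∀ y, G y = g y}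
  mul_mem' := by
    rintro a b ⟨g, hg, h⟩ ⟨g', hg', h'⟩
    exact ⟨fun y => g y * g' y, hg.mul hg', fun y => by simp [h, h']⟩
  add_mem' := by
    rintro a b ⟨g, hg, h⟩ ⟨g', hg', h'⟩
    exact ⟨fun y => g y + g' y, hg.add hg', fun y => by simp [h, h']⟩
  algebraMap_mem' := fun r => ⟨fun _ => r, contDiff_const, fun y => by simp⟩

lemma exists_dense_family : ∃ gs : ℕ → V → ℝ, (∀ i, ContDiff ℝ 1 (gs i)) ∧
    ∀ G : V → ℝ, ContinuousOn G (Metric.closedBall (0 : V) 1) → ∀ ε > 0, ∃ i,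
      ∀ y ∈ Metric.closedBall (0 : V) 1, |G y - gs i y| ≤ ε := by
  have : ProperSpace V := FiniteDimensional.proper ℝ V
  have hK : CompactSpace (Metric.closedBall (0 : V) 1) :=
    isCompact_iff_compactSpace.1 (isCompact_closedBall _ _)
  have hS : (smAlg V).topologicalClosure = ⊤ := by
    refine ContinuousMap.subalgebra_topologicalClosure_eq_top_of_separatesPoints _ ?_
    intro x y hxy
    refine ⟨fun v => ‖(v : V) - x‖ ^ 2, ⟨⟨fun v => ‖(v : V) - x‖ ^ 2, by fun_prop⟩,
      ⟨fun v => ‖v - x‖ ^ 2, ?_, fun y => rfl⟩, rfl⟩, ?_⟩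
    · exact (contDiff_id.sub contDiff_const).norm_sq ℝ
    · intro h
      apply hxy
      have h1 : ‖(y : V) - x‖ ^ 2 = 0 := by
        refine h.symm.trans ?_
        simp
      have h2 : (y : V) - x = 0 := by simpa using h1
      exact Subtype.ext (sub_eq_zero.1 h2).symm
  obtain ⟨d, hd⟩ : ∃ d : ℕ → smAlg V, DenseRange d :=
    ⟨_, TopologicalSpace.denseRange_denseSeq (smAlg V)⟩
  have hdc : ∀ i, ∃ g : V → ℝ, ContDiff ℝ 1 g ∧ ∀ y, (d i).1 y = g y := fun i => (d i).2
  choose gs hgs1 hgs2 using hdc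
  refine ⟨gs, hgs1, fun G hG ε hε => ?_⟩
  let G' : C(Metric.closedBall (0 : V) 1, ℝ) := ⟨_, hG.domRestrict⟩
  have hG' : G' ∈ closure ((smAlg V : Subalgebra ℝ _) : Set C(Metric.closedBall (0 : V) 1, ℝ)) := by
    have : G' ∈ (smAlg V).topologicalClosure := by rw [hS]; trivial
    exact this
  obtain ⟨s, hs, hGs⟩ := Metric.mem_closure_iff.1 hG' (ε / 2) (by positivity)
  obtain ⟨i, hi⟩ := hd.exists_dist_lt (⟨s, hs⟩ : smAlg V) (ε := ε / 2) (by positivity)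
  refine ⟨i, fun y hy => ?_⟩
  have h1 := (ContinuousMap.dist_apply_le_dist (f := G') (g := s) ⟨y, hy⟩).trans hGs.le
  have h2 := (ContinuousMap.dist_apply_le_dist (f := s) (g := (d i).1) ⟨y, hy⟩).trans
    (show dist s (d i).1 ≤ ε / 2 from hi.le)
  have h3 := hgs2 i ⟨y, hy⟩
  have h4 := dist_triangle (G' ⟨y, hy⟩) (s ⟨y, hy⟩) ((d i).1 ⟨y, hy⟩)
  rw [h3] at h4 h2
  have h5 : G' ⟨y, hy⟩ = G y := rfl
  rw [h5] at h4 h1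
  rw [← Real.dist_eq]
  linarith

end Dense

section Forward

variable {n k l : ℕ}
    {V W U : Type*} [NormedAddCommGroup V] [InnerProductSpace ℝ V] [FiniteDimensional ℝ V]
    [MeasurableSpace V] [BorelSpace V]
    [NormedAddCommGroup W] [InnerProductSpace ℝ W] [FiniteDimensional ℝ W]
    [NormedAddCommGroup U] [InnerProductSpace ℝ U] [FiniteDimensional ℝ U]
    {A : (Fin n → ℕ) → (V →L[ℝ] W)} {B : (Fin n → ℕ) → (U →L[ℝ] V)}
    {z : V} {nu0 : Measure V} {nuInf : Measure (Metric.sphere (0:V) 1)}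

lemma inner_hasRec (e : V) : HasRec (fun v => inner ℝ e v) (fun v => inner ℝ e v) := by
  intro s hs x
  refine ⟨Set.univ, univ_mem, ?_⟩
  filter_upwards [eventually_gt_atTop (0 : ℝ)] with t ht y _
  have : inner ℝ e (t • y) / t = inner ℝ e y := by
    rw [inner_smul_right, mul_div_cancel_left₀ _ ht.ne']
  simp only [this]
  exact refl_mem_uniformity hs

lemma inner_memH (e : V) : MemH (fun v => inner ℝ e v) := by
  refine ⟨by fun_prop, ⟨‖e‖, fun v => ?_⟩, _, inner_hasRec e⟩
  refine (abs_real_inner_le_norm e v).trans ?_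
  gcongr
  linarith

lemma cont_opApply {u : Dom n → U} (hu : CcSmooth (unitCube n) u) :
    Continuous (opApply B l u) :=
  (Sm.opApply (u := u) hu.1).continuous

lemma fwd_bary (hl : 0 < l) [IsProbabilityMeasure nu0] [IsFiniteMeasure nuInf]
    (hmom : Integrable (fun v : V => ‖v‖) nu0) (h : memY B l z nu0 nuInf) :
    (∫ v, v ∂nu0) + (∫ w, (w : V) ∂nuInf) = z := by
  obtain ⟨u, hu, -, hlim⟩ := h
  refine ext_inner_left ℝ fun e => ?_
  have h1 := hlim _ (inner_memH e)
  have h2 : ∀ j, ∫ x in unitCube n, inner ℝ e (z + opApply B l (u j) x) = inner ℝ e z := by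
    intro j
    have hi := cube_integrable (n := n) (cont_opApply (B := B) (l := l) (hu j))
    have hz : Integrable (fun _ : Dom n => z) (volume.restrict (unitCube n)) := integrable_const _
    refine (integral_inner (hz.add hi) e).trans ?_
    simp only [Pi.add_apply]
    rw [integral_add hz hi, integral_cube_opApply hl (hu j)]
    simp
  simp only [h2] at h1
  have h3 := tendsto_nhds_unique h1 tendsto_const_nhds
  have hid : Integrable (fun v : V => v) nu0 :=
    (integrable_norm_iff continuous_id.aestronglyMeasurable).1 hmom
  have hiw : Integrable (fun w : Metric.sphere (0:V) 1 => (w : V)) nuInf :=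
    Integrable.mono' (integrable_const (1 : ℝ)) continuous_subtype_val.aestronglyMeasurable
      (Eventually.of_forall fun w => by simp)
  have h4 : ∀ w : Metric.sphere (0:V) 1, rrec (fun v => inner ℝ e v) (w : V) = inner ℝ e (w : V) :=
    fun w => rrec_of_hasRec (inner_hasRec e) _
  simp only [h4] at h3
  rw [integral_inner hid, integral_inner hiw, ← inner_add_right] at h3
  exact h3

lemma fwd_jensen (hk : 0 < k) (hl : 0 < l) (hexact : ExactPotential A k B l)
    [IsProbabilityMeasure nu0] [IsFiniteMeasure nuInf]
    (hmom : Integrable (fun v : V => ‖v‖) nu0) (h : memY B l z nu0 nuInf)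
    {f : V → ℝ} (hf : AQuasiconvex A k f) (hg : LinearGrowth f) :
    f z ≤ (∫ v, f v ∂nu0) + ∫ w, urec f (w : V) ∂nuInf := by
  have hP : ProperSpace V := FiniteDimensional.proper ℝ V
  obtain ⟨c, hc⟩ := hg
  obtain ⟨u, hu, -, hlim⟩ := h
  refine ge_of_tendsto' (infc_lim (nuInf := nuInf) hmom hf.1 hc) fun m => ?_
  have hm : (0 : ℝ) ≤ m := Nat.cast_nonneg m
  have hmc := infc_cont hc hm
  have h1 := hlim _ (liftG_memH hmc)
  have h2 : ∀ w : Metric.sphere (0:V) 1, rrec (liftG (infc f m)) (w : V) = infc f m (w : V) :=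
    fun w => rrec_liftG hmc (by simp)
  simp only [h2] at h1
  refine ge_of_tendsto' h1 fun j => ?_
  have hcj := cont_opApply (B := B) (l := l) (hu j)
  have h3 := cc_of_aqc hf z (v := opApply B l (u j)) (Sm.opApply (u := u j) (hu j).1)
    (tsupport_opApply.trans (hu j).2.2) (integral_cube_opApply hl (hu j))
    (fun x => opApply_opApply hk hexact (hu j).1 x)
  refine h3.trans ?_
  have hfc := hf.1
  have hlc := continuous_liftG hmc
  exact setIntegral_mono (cube_integrable (by fun_prop)) (cube_integrable (by fun_prop))
    fun x => le_liftG_infc hc hm _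

end Forward

section Backward

variable {n k l : ℕ}
    {V W U : Type*} [NormedAddCommGroup V] [InnerProductSpace ℝ V] [FiniteDimensional ℝ V]
    [MeasurableSpace V] [BorelSpace V]
    [NormedAddCommGroup W] [InnerProductSpace ℝ W] [FiniteDimensional ℝ W]
    [NormedAddCommGroup U] [InnerProductSpace ℝ U] [FiniteDimensional ℝ U]
    {A : (Fin n → ℕ) → (V →L[ℝ] W)} {B : (Fin n → ℕ) → (U →L[ℝ] V)}
    {z : V} {nu0 : Measure V} {nuInf : Measure (Metric.sphere (0:V) 1)}

def pairJ (nu0 : Measure V) (nuInf : Measure (Metric.sphere (0:V) 1)) (g : V → ℝ) : ℝ :=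
  (∫ v, liftG g v ∂nu0) + ∫ w, g (w : V) ∂nuInf

lemma liftG_integrable [IsProbabilityMeasure nu0]
    (hmom : Integrable (fun v : V => ‖v‖) nu0) {g : V → ℝ} (hg : Continuous g) :
    Integrable (liftG g) nu0 := by
  have hP : ProperSpace V := FiniteDimensional.proper ℝ V
  obtain ⟨c, hc⟩ := liftG_growth hg
  exact growth_integrable hmom (continuous_liftG hg) hc

lemma sphere_integrable [IsFiniteMeasure nuInf] {g : V → ℝ}
    (hg : ContinuousOn g (Metric.closedBall (0 : V) 1)) :
    Integrable (fun w : Metric.sphere (0:V) 1 => g (w : V)) nuInf := by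
  have hP : ProperSpace V := FiniteDimensional.proper ℝ V
  obtain ⟨C, hC⟩ := (isCompact_closedBall (0 : V) 1).exists_bound_of_continuousOn hg
  have hc : Continuous (fun w : Metric.sphere (0:V) 1 => g (w : V)) :=
    hg.comp_continuous continuous_subtype_val fun w => by simp
  exact Integrable.mono' (integrable_const C) hc.aestronglyMeasurable
    (Eventually.of_forall fun w => hC _ (by simp))

lemma jensen_lower (hexact : ExactPotential A k B l)
    [IsProbabilityMeasure nu0] [IsFiniteMeasure nuInf]
    (hmom : Integrable (fun v : V => ‖v‖) nu0)
    (hJ : ∀ f : V → ℝ, AQuasiconvex A k f → LinearGrowth f →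
         f z ≤ (∫ v, f v ∂nu0) + ∫ w, urec f (w : V) ∂nuInf)
    {g : V → ℝ} (hg : ContDiff ℝ 1 g) {s : ℝ}
    (hs : ∀ u, CcSmooth (unitCube n) u → s ≤ cubeI B l (liftG g) z u) :
    s ≤ pairJ nu0 nuInf g := by
  have hP : ProperSpace V := FiniteDimensional.proper ℝ V
  obtain ⟨L, hL⟩ := liftG_lip_of_contDiff hg
  have hQ := qcv_lip hL hs
  obtain ⟨c, hc⟩ := hQ.linearGrowth
  have h1 := hJ _ (qcv_aqc hexact hL hs) hQ.linearGrowth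
  refine (le_qcv hs).trans (h1.trans ?_)
  unfold pairJ
  refine add_le_add ?_ ?_
  · exact integral_mono (growth_integrable hmom hQ.continuous hc)
      (liftG_integrable hmom hg.continuous) fun v => qcv_le_self hL hs v
  · exact integral_mono (urec_integrable hc) (sphere_integrable hg.continuous.continuousOn)
      fun w => urec_le_of_le hc hg.continuous (qcv_le_self hL hs) (by simp)

lemma glue_cubeI {N : ℕ} (hN : 0 < N) {u : (Fin n → Fin N) → Dom n → U}
    (h : ∀ i, CcSmooth (unitCube n) (u i)) {Φ : V → ℝ} (hΦ : Continuous Φ) :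
    cubeI B l Φ z (glue N l u) = ∑ i, ((N : ℝ) ^ n)⁻¹ * cubeI B l Φ z (u i) :=
  glue_integral hN h B (H := fun _ v => Φ (z + v)) (by fun_prop)

lemma glue_const_cubeI {N : ℕ} (hN : 0 < N) {u : Dom n → U}
    (h : CcSmooth (unitCube n) u) {Φ : V → ℝ} (hΦ : Continuous Φ) :
    cubeI B l Φ z (glue N l fun _ : Fin n → Fin N => u) = cubeI B l Φ z u := by
  rw [glue_cubeI hN (fun _ => h) hΦ, Finset.sum_const, Finset.card_univ, nsmul_eq_mul, card_grid,
    mul_inv_cancel_left₀ (by positivity)]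

lemma glue_mix_cubeI {N : ℕ} (hN : 0 < N) (S : Finset (Fin n → Fin N)) {u v : Dom n → U}
    (hu : CcSmooth (unitCube n) u) (hv : CcSmooth (unitCube n) v) :
    ∃ w : Dom n → U, CcSmooth (unitCube n) w ∧ ∀ Φ : V → ℝ, Continuous Φ →
      cubeI B l Φ z w = (S.card / (N : ℝ) ^ n) * cubeI B l Φ z u +
        (1 - S.card / (N : ℝ) ^ n) * cubeI B l Φ z v := by
  classical
  have hc : ∀ i : Fin n → Fin N, CcSmooth (unitCube n) (if i ∈ S then u else v) := by
    intro i; split_ifs <;> assumption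
  refine ⟨glue N l fun i => if i ∈ S then u else v, glue_cc hN hc, fun Φ hΦ => ?_⟩
  rw [glue_cubeI hN hc hΦ, ← Finset.mul_sum]
  have h1 : ∀ i : Fin n → Fin N, cubeI B l Φ z (if i ∈ S then u else v) =
      cubeI B l Φ z v + if i ∈ S then (cubeI B l Φ z u - cubeI B l Φ z v) else 0 := by
    intro i; split_ifs <;> ring
  have hN' : ((N : ℝ) ^ n) ≠ 0 := by positivity
  simp only [h1]
  rw [Finset.sum_add_distrib, Finset.sum_const, Finset.card_univ, nsmul_eq_mul, card_grid,
    Finset.sum_ite_mem, Finset.univ_inter, Finset.sum_const, nsmul_eq_mul]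
  field_simp
  ring

lemma convex_closure_of {E : Type*} [NormedAddCommGroup E] [NormedSpace ℝ E] {M : Set E}
    (h : ∀ a ∈ M, ∀ b ∈ M, ∀ θ : ℝ, 0 ≤ θ → θ ≤ 1 → θ • a + (1 - θ) • b ∈ closure M) :
    Convex ℝ (closure M) := by
  intro a ha b hb s t hs ht hst
  have e : t = 1 - s := by linarith
  subst e
  have := map_mem_closure₂ (f := fun a b : E => s • a + (1 - s) • b) (by fun_prop) ha hb
    (u := closure M) (fun a ha b hb => h a ha b hb s hs (by linarith))
  rwa [closure_closure] at this

lemma approx_finite (hn : 0 < n) (hexact : ExactPotential A k B l)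
    [IsProbabilityMeasure nu0] [IsFiniteMeasure nuInf]
    (hmom : Integrable (fun v : V => ‖v‖) nu0)
    (hJ : ∀ f : V → ℝ, AQuasiconvex A k f → LinearGrowth f →
         f z ≤ (∫ v, f v ∂nu0) + ∫ w, urec f (w : V) ∂nuInf)
    {m : ℕ} {g : Fin m → V → ℝ} (hg : ∀ i, ContDiff ℝ 1 (g i)) {ε : ℝ} (hε : 0 < ε) :
    ∃ u : Dom n → U, CcSmooth (unitCube n) u ∧
      ∀ i, |cubeI B l (liftG (g i)) z u - pairJ nu0 nuInf (g i)| < ε := by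
  have hP : ProperSpace V := FiniteDimensional.proper ℝ V
  let M : Set (Fin m → ℝ) := {a | ∃ u : Dom n → U, CcSmooth (unitCube n) u ∧
    ∀ i, a i = cubeI B l (liftG (g i)) z u}
  have hconv : Convex ℝ (closure M) := by
    refine convex_closure_of ?_
    rintro a ⟨u, hu, hau⟩ b ⟨v, hv, hbv⟩ θ h0 h1
    have hq : Tendsto (fun N : ℕ => (⌊θ * (N : ℝ) ^ n⌋₊ : ℝ) / (N : ℝ) ^ n) atTop (𝓝 θ) :=
      (tendsto_nat_floor_mul_div_atTop h0).comp
        ((tendsto_pow_atTop hn.ne').comp tendsto_natCast_atTop_atTop)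
    have hlim : Tendsto (fun N : ℕ => ((⌊θ * (N : ℝ) ^ n⌋₊ : ℝ) / (N : ℝ) ^ n) • a +
        (1 - (⌊θ * (N : ℝ) ^ n⌋₊ : ℝ) / (N : ℝ) ^ n) • b) atTop (𝓝 (θ • a + (1 - θ) • b)) :=
      (hq.smul_const a).add ((tendsto_const_nhds.sub hq).smul_const b)
    refine mem_closure_of_tendsto hlim ?_
    filter_upwards [eventually_gt_atTop 0] with N hN
    have hcard : ⌊θ * (N : ℝ) ^ n⌋₊ ≤ (Finset.univ : Finset (Fin n → Fin N)).card := by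
      rw [Finset.card_univ]
      refine Nat.floor_le_of_le ?_
      rw [card_grid]
      exact mul_le_of_le_one_left (by positivity) h1
    obtain ⟨S, -, hS⟩ := Finset.exists_subset_card_eq hcard
    obtain ⟨w, hw, hw2⟩ := glue_mix_cubeI (B := B) (l := l) (z := z) hN S hu hv
    refine ⟨w, hw, fun i => ?_⟩
    rw [hw2 _ (continuous_liftG (hg i).continuous), hS]
    simp [hau, hbv]
  by_cases hx : (fun i => pairJ nu0 nuInf (g i)) ∈ closure M
  · obtain ⟨a, ⟨u, hu, hau⟩, had⟩ := Metric.mem_closure_iff.1 hx ε hε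
    refine ⟨u, hu, fun i => ?_⟩
    have := (dist_pi_lt_iff hε).1 had i
    rw [dist_comm, Real.dist_eq, hau] at this
    exact this
  · exfalso
    obtain ⟨F, s, hF1, hF2⟩ := geometric_hahn_banach_point_closed hconv isClosed_closure hx
    let c : Fin m → ℝ := fun i => F (Pi.single i 1)
    have hF : ∀ a : Fin m → ℝ, F a = ∑ i, c i * a i := by
      intro a
      conv_lhs => rw [pi_eq_sum_univ' a]
      rw [map_sum]
      refine Finset.sum_congr rfl fun i _ => ?_
      rw [map_smul, smul_eq_mul, mul_comm]
    let G : V → ℝ := fun y => ∑ i, c i * g i y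
    have hG : ContDiff ℝ 1 G := ContDiff.sum fun i _ => contDiff_const.mul (hg i)
    have hlG : ∀ v, liftG G v = ∑ i, c i * liftG (g i) v := by
      intro v
      simp only [liftG_eq, G, Finset.mul_sum]
      exact Finset.sum_congr rfl fun i _ => by ring
    have hpair : pairJ nu0 nuInf G = F (fun i => pairJ nu0 nuInf (g i)) := by
      rw [hF]
      unfold pairJ
      simp only [hlG, G]
      rw [integral_finsetSum _ fun i _ =>
          (liftG_integrable hmom (hg i).continuous).const_mul (c i),
        integral_finsetSum _ fun i _ =>
          (sphere_integrable (hg i).continuous.continuousOn).const_mul (c i),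
        ← Finset.sum_add_distrib]
      exact Finset.sum_congr rfl fun i _ => by
        rw [integral_const_mul, integral_const_mul]; ring
    have hcube : ∀ u : Dom n → U, CcSmooth (unitCube n) u →
        cubeI B l (liftG G) z u = F (fun i => cubeI B l (liftG (g i)) z u) := by
      intro u hu
      rw [hF]
      unfold cubeI
      have hcu := cont_opApply (B := B) (l := l) hu
      simp only [hlG]
      rw [integral_finsetSum _ fun i _ => ?_]
      · exact Finset.sum_congr rfl fun i _ => by rw [integral_const_mul]
      · have := continuous_liftG (hg i).continuous
        exact (cube_integrable (n := n) (by fun_prop))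
    have hlow := jensen_lower (B := B) hexact hmom hJ hG (s := s) fun u hu => by
      rw [hcube u hu]
      exact (hF2 _ (subset_closure ⟨u, hu, fun i => rfl⟩)).le
    rw [hpair] at hlow
    linarith

lemma approx_finite' (hn : 0 < n) (hexact : ExactPotential A k B l)
    [IsProbabilityMeasure nu0] [IsFiniteMeasure nuInf]
    (hmom : Integrable (fun v : V => ‖v‖) nu0)
    (hJ : ∀ f : V → ℝ, AQuasiconvex A k f → LinearGrowth f →
         f z ≤ (∫ v, f v ∂nu0) + ∫ w, urec f (w : V) ∂nuInf)
    {m : ℕ} {g : Fin m → V → ℝ} (hg : ∀ i, ContDiff ℝ 1 (g i)) {ε : ℝ} (hε : 0 < ε) :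
    ∃ u : Dom n → U, CcSmooth (unitCube n) u ∧ sobNorm l u < ε ∧
      ∀ i, |cubeI B l (liftG (g i)) z u - pairJ nu0 nuInf (g i)| < ε := by
  have hP : ProperSpace V := FiniteDimensional.proper ℝ V
  obtain ⟨u, hu, h⟩ := approx_finite hn hexact hmom hJ hg hε
  have hlim : Tendsto (fun N : ℕ => (N : ℝ)⁻¹ * sobNorm l u) atTop (𝓝 0) := by
    have := tendsto_inv_atTop_nhds_zero_nat (𝕜 := ℝ) |>.mul_const (sobNorm l u)
    rwa [zero_mul] at this
  obtain ⟨N, hN1, hN⟩ := ((hlim.eventually_lt_const hε).and (eventually_gt_atTop 0)).exists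
  refine ⟨glue N l fun _ => u, glue_cc hN fun _ => hu, (glue_sob hN hu).trans_lt hN1, fun i => ?_⟩
  rw [glue_const_cubeI hN hu (continuous_liftG (hg i).continuous)]
  exact h i

lemma abs_int_sub_le {α : Type*} [MeasurableSpace α] {μ : Measure α} {f g h : α → ℝ}
    (hf : Integrable f μ) (hg : Integrable g μ) (hh : Integrable h μ) {ε : ℝ}
    (hle : ∀ x, |f x - g x| ≤ ε * h x) : |∫ x, f x ∂μ - ∫ x, g x ∂μ| ≤ ε * ∫ x, h x ∂μ := by
  rw [← integral_sub hf hg, ← integral_const_mul]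
  exact norm_integral_le_of_norm_le (hh.const_mul ε)
    (Eventually.of_forall fun x => by rw [Real.norm_eq_abs]; exact hle x)

lemma bwd (hn : 0 < n) (hexact : ExactPotential A k B l)
    [IsProbabilityMeasure nu0] [IsFiniteMeasure nuInf]
    (hmom : Integrable (fun v : V => ‖v‖) nu0)
    (hJ : ∀ f : V → ℝ, AQuasiconvex A k f → LinearGrowth f →
         f z ≤ (∫ v, f v ∂nu0) + ∫ w, urec f (w : V) ∂nuInf) : memY B l z nu0 nuInf := by
  have hP : ProperSpace V := FiniteDimensional.proper ℝ V
  obtain ⟨gs, hgs, hdense⟩ := exists_dense_family (V := V)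
  let one : V → ℝ := fun _ => 1
  have hone : ContDiff ℝ 1 one := contDiff_const
  have hchoose : ∀ j : ℕ, ∃ u : Dom n → U, CcSmooth (unitCube n) u ∧
      sobNorm l u < 1 / ((j : ℝ) + 1) ∧
      |cubeI B l (liftG one) z u - pairJ nu0 nuInf one| < 1 / ((j : ℝ) + 1) ∧
      ∀ i < j, |cubeI B l (liftG (gs i)) z u - pairJ nu0 nuInf (gs i)| < 1 / ((j : ℝ) + 1) := by
    intro j
    obtain ⟨u, h1, h2, h3⟩ := approx_finite' (B := B) hn hexact hmom hJ
      (g := Fin.cons one fun i : Fin j => gs i)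
      (by intro i; refine Fin.cases ?_ (fun i => ?_) i
          · simpa using hone
          · simpa using hgs i) (ε := 1 / ((j : ℝ) + 1)) (by positivity)
    refine ⟨u, h1, h2, by simpa using h3 0, fun i hi => ?_⟩
    have := h3 (Fin.succ ⟨i, hi⟩)
    rwa [Fin.cons_succ] at this
  choose u hu hsob h1 hi using hchoose
  have hz : Tendsto (fun j : ℕ => 1 / ((j : ℝ) + 1)) atTop (𝓝 0) :=
    tendsto_one_div_add_atTop_nhds_zero_nat
  refine ⟨u, hu, squeeze_zero (fun j => sob_nonneg l _) (fun j => (hsob j).le) hz, ?_⟩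
  intro Φ hΦ
  obtain ⟨G, hGc, hG1, hG2⟩ := memH_rep hΦ
  obtain ⟨hΦc, ⟨c, hc⟩, -⟩ := hΦ
  have hr : ∀ w : Metric.sphere (0:V) 1, rrec Φ (w : V) = G w := fun w => hG2 _ (by simp)
  simp only [hr]
  have hl1 : ∀ v, liftG one v = 1 + ‖v‖ := fun v => by simp [liftG_eq, one]
  have hK0 : 0 ≤ pairJ nu0 nuInf one := by
    refine add_nonneg (integral_nonneg fun v => ?_) (integral_nonneg fun w => by simp [one])
    rw [hl1]; exact (one_add_pos v).le
  set K := pairJ nu0 nuInf one with hK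
  rw [Metric.tendsto_atTop']
  intro η hη
  let ε := (η / 2) / (2 * K + 2)
  have hε : 0 < ε := by positivity
  have hεK : ε * (2 * K + 2) = η / 2 := div_mul_cancel₀ _ (by positivity)
  obtain ⟨i, hGi⟩ := hdense G hGc ε hε
  have hpt : ∀ v, |Φ v - liftG (gs i) v| ≤ ε * liftG one v := by
    intro v
    rw [hG1, liftG_eq, ← mul_sub, abs_mul, abs_of_pos (one_add_pos v), hl1, mul_comm]
    exact mul_le_mul_of_nonneg_right (hGi _ (comp1_mem v)) (one_add_pos v).le
  have hpair : |((∫ v, Φ v ∂nu0) + ∫ w, G (w : V) ∂nuInf) - pairJ nu0 nuInf (gs i)| ≤ ε * K := by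
    have e1 := abs_int_sub_le (growth_integrable hmom hΦc hc)
      (liftG_integrable hmom (hgs i).continuous) (liftG_integrable hmom hone.continuous) hpt
    have e2 := abs_int_sub_le (μ := nuInf) (sphere_integrable hGc)
      (sphere_integrable (hgs i).continuous.continuousOn)
      (sphere_integrable hone.continuous.continuousOn) (ε := ε)
      (fun w => by simpa [one] using hGi w (by simp))
    have e3 : ε * K = ε * (∫ v, liftG one v ∂nu0) + ε * ∫ w, one (w : V) ∂nuInf := by
      rw [hK, pairJ, mul_add]
    rw [e3]
    refine le_trans ?_ (add_le_add e1 e2)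
    refine le_trans (le_of_eq ?_) (abs_add_le _ _)
    unfold pairJ
    congr 1
    ring
  obtain ⟨j0, hj0⟩ := (hz.eventually_lt_const (show (0:ℝ) < min 1 (η / 2) by positivity)).exists_forall_of_atTop
  refine ⟨max j0 i, fun j hj => ?_⟩
  have hj1 := hj0 j ((le_max_left _ _).trans hj.le)
  have hj2 : i < j := (le_max_right _ _).trans_lt hj
  have hcu := cont_opApply (B := B) (l := l) (hu j)
  have hl1c := continuous_liftG hone.continuous
  have hlgc := continuous_liftG (hgs i).continuous
  have e1 := abs_int_sub_le (μ := volume.restrict (unitCube n))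
    (f := fun x => Φ (z + opApply B l (u j) x)) (g := fun x => liftG (gs i) (z + opApply B l (u j) x))
    (h := fun x => liftG one (z + opApply B l (u j) x)) (ε := ε)
    (cube_integrable (by fun_prop)) (cube_integrable (by fun_prop)) (cube_integrable (by fun_prop))
    (fun x => hpt _)
  have e2 := (hi j i hj2).trans hj1
  have e3 := (h1 j).trans hj1
  have e2' := e2.trans_le (min_le_right _ _)
  have e3' := e3.trans_le (min_le_left _ _)
  unfold cubeI at e2' e3'
  rw [Real.dist_eq]
  have e4 := (abs_lt.1 e3').2
  have e5 : ε * (∫ x in unitCube n, liftG one (z + opApply B l (u j) x)) ≤ ε * (K + 1) :=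
    mul_le_mul_of_nonneg_left (by linarith) hε.le
  rw [abs_lt] at e2' ⊢
  rw [abs_le] at e1 hpair
  constructor <;> nlinarith [e1.1, e1.2, hpair.1, hpair.2, e2'.1, e2'.2]

end Backward

theorem stmt1 {n k l : ℕ} (hn : 0 < n) (hk : 0 < k) (hl : 0 < l)
    {V W U : Type*} [NormedAddCommGroup V] [InnerProductSpace ℝ V] [FiniteDimensional ℝ V]
    [MeasurableSpace V] [BorelSpace V]
    [NormedAddCommGroup W] [InnerProductSpace ℝ W] [FiniteDimensional ℝ W]
    [NormedAddCommGroup U] [InnerProductSpace ℝ U] [FiniteDimensional ℝ U]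
    (A : (Fin n → ℕ) → (V →L[ℝ] W)) (B : (Fin n → ℕ) → (U →L[ℝ] V))
    (hspan : SpanningCone A k) (hexact : ExactPotential A k B l)
    (z : V) (nu0 : Measure V) (nuInf : Measure (Metric.sphere (0:V) 1))
    (hprob : IsProbabilityMeasure nu0) (hmom : Integrable (fun v : V => ‖v‖) nu0)
    (hfin : IsFiniteMeasure nuInf) :
    memY B l z nu0 nuInf ↔
      ((∫ v, v ∂nu0) + (∫ w, (w : V) ∂nuInf) = z ∧
       ∀ f : V → ℝ, AQuasiconvex A k f → LinearGrowth f →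
         f z ≤ (∫ v, f v ∂nu0) + ∫ w, urec f (w : V) ∂nuInf) := by
  constructor
  · intro h
    exact ⟨fwd_bary hl hmom h, fun f hf hg => fwd_jensen hk hl hexact hmom h hf hg⟩
  · rintro ⟨-, hJ⟩
    exact bwd hn hexact hmom hJ


end
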